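/- Let m and d be integers with 0 ≤ m ≤ d−1, let p be a prime, and for each 0 ≤ ℓ ≤ m let r_ℓ = p^{e_ℓ} be a power of p with integer e_ℓ ≥ 0. Set N_ℓ = (r_ℓ−1)(d+2−m) and k_ℓ = ⌈((r_ℓ−1)/r_ℓ)·d⌉. Assume that p(d−m) is even, or m = 0. Then for every collection of continuous maps f_0: Δ_{N_0} → ℝ^d, …, f_m: Δ_{N_m} → ℝ^d there exist an m-dimensional affine subspace L of ℝ^d and, for each 0 ≤ ℓ ≤ m, r_ℓ pairwise disjoint faces σ_1^ℓ, …, σ_{r_ℓ}^ℓ in the k_ℓ-skeleton of Δ_{N_ℓ} such that f_ℓ(σ_j^ℓ) ∩ L ≠ ∅ for all 1 ≤ j ≤ r_ℓ. (The topological generalized transversal Van Kampen–Flores theorem.) -/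

import Mathlib

/-!
The theorem is a statement about common zeros of equivariant functions (configuration space / test
map scheme), and the zeros are forced by a nonvanishing Euler class modulo `p`, computed here with
explicit cochains.

**Configurations.** Let `X` be the product over `j` of joins of `M j + 1` copies of `ℤ/p`, with the
free coordinatewise action of `(ℤ/p)^ι`. There are `e ℓ` factors for the `ℓ`-th map and `s` further
ones. A point of `X` determines, for every `ℓ` and every `g` in `(ℤ/p)^{e ℓ}`, an unnormalized point
`Λ_g` in the cone over the simplex of dimension `N ℓ`, and these `p ^ e ℓ` points have disjoint
supports (`Lam`, `Lam_disjoint`). It also determines `s` nonzero normal vectors `W_i`, complex for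
odd `p` and real for `p = 2` (`Wv`, `Wv_ne_zero`); over the reals they account for `d - m`
directions, which for odd `p` is where the parity hypothesis enters. If the parity fails, then
`m = 0`, and the `d` coordinate directions are used instead of the `W_i`.

**Equations** (`fn`). The nontrivial Fourier coefficients in `g` of the total mass of `Λ_g`, of the
elementary symmetric function of degree `k ℓ + 2` of its coordinates, and of the products of its
image with the normal directions have to vanish, so that none of these depends on `g`. The averages
over `g` of the last ones have to agree for all `ℓ`, and the `W_i` have to be orthogonal. Common
masses allow one to normalize. If the common value of the symmetric function were not zero, then
every `Λ_g` would have at least `k ℓ + 2` vertices in its support, more in total than the simplex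
has (`card_support_lt`); so all supports have at most `k ℓ + 1` vertices. Finally, the affine
subspace with normal directions `W_i` through one of the image points meets all of them
(`exists_flat_of_dirs`).

**Existence of a zero** (`exists_zero`). Each function `f_k` in the system is multiplied by a
character `α_k` of the group. If there were no common zero, the sectors of the plane in which the
values `f_k` lie would give, on every tuple of points of small diameter, at least one function whose
pulled back Bockstein cocycle vanishes there. Hence the product of these cocycles vanishes on fine
subdivisions of `X`. On the other hand every one of them is equivariantly cohomologous to the
combination with coefficients `α_k j` of the Bockstein cocycles of the coordinates `j`; the product
of these combinations, evaluated on a chain `Z` of `X` that kills coboundaries of invariant cochains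
(`Z_del_inv`), is a sum over the ways to pick one coordinate per equation (`Z_prodC`). The
characters are triangular with leading terms `ldx`, and the number of equations with leading term `j`
fits `M j`, so only the choice of all the leading terms contributes, and the value is a product of
nonzero leading coefficients (`NN_eq_prod`). Barycentric subdivision does not change the value
(`functional_sd_iterate`), a contradiction.
-/

open scoped BigOperators

noncomputable section

/-- The standard `N`-dimensional simplex, realized in Euclidean space `ℝ^{N+1}`. -/
def stdSimp (N : ℕ) : Set (EuclideanSpace ℝ (Fin (N + 1))) :=
  {x | (∀ i, 0 ≤ x i) ∧ ∑ i, x i = 1}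

/-- The face of the standard simplex spanned by the vertex set `S`. -/
def simpFace (N : ℕ) (S : Finset (Fin (N + 1))) : Set (EuclideanSpace ℝ (Fin (N + 1))) :=
  {x ∈ stdSimp N | ∀ i, x i ≠ 0 → i ∈ S}

namespace VKF

/-! ### Ordered cochains -/

section Cochains

variable {X Y R : Type*} [CommRing R]

/-- The coboundary of a cochain on ordered tuples, written as lists; a tuple of length `n` is a
simplex of dimension `n - 1`, and the empty list is the augmentation. The value at `l` is the
alternating sum of the values of `Q` at the lists obtained from `l` by erasing one entry. -/
def del (Q : List X → R) : List X → R
  | [] => 0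
  | y :: l => Q l - del (fun l' => Q (y :: l')) l

@[simp] lemma del_nil (Q : List X → R) : del Q [] = 0 := rfl

lemma del_cons (Q : List X → R) (y : X) (l : List X) :
    del Q (y :: l) = Q l - del (fun l' => Q (y :: l')) l := rfl

lemma del_congr (Q Q' : List X → R) (l : List X)
    (h : ∀ l', List.Sublist l' l → l'.length + 1 = l.length → Q l' = Q' l') :
    del Q l = del Q' l := by
  induction l generalizing Q Q' with
  | nil => rfl
  | cons y l ih =>
    rw [del_cons, del_cons, h l (List.sublist_cons_self y l) (by simp),
      ih (fun l' => Q (y :: l')) (fun l' => Q' (y :: l'))]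
    intro l' hl' hlen
    exact h _ (hl'.cons_cons y) (by simpa using hlen)

@[simp] lemma del_zero (l : List X) : del (fun _ => (0 : R)) l = 0 := by
  induction l with
  | nil => rfl
  | cons y l ih => rw [del_cons, ih, sub_zero]

lemma del_eq_zero (Q : List X → R) (l : List X)
    (h : ∀ l', List.Sublist l' l → l'.length + 1 = l.length → Q l' = 0) : del Q l = 0 := by
  rw [del_congr Q (fun _ => 0) l h, del_zero]

lemma del_sub (Q Q' : List X → R) (l : List X) :
    del (fun l => Q l - Q' l) l = del Q l - del Q' l := by
  induction l generalizing Q Q' with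
  | nil => simp
  | cons y l ih => simp only [del_cons, ih]; ring

lemma del_add (Q Q' : List X → R) (l : List X) :
    del (fun l => Q l + Q' l) l = del Q l + del Q' l := by
  induction l generalizing Q Q' with
  | nil => simp
  | cons y l ih => simp only [del_cons, ih]; ring

lemma del_mul (a : R) (Q : List X → R) (l : List X) :
    del (fun l => a * Q l) l = a * del Q l := by
  induction l generalizing Q with
  | nil => simp
  | cons y l ih => simp only [del_cons, ih]; ring

lemma del_sum {J : Type*} (s : Finset J) (Q : J → List X → R) (l : List X) :
    del (fun l => ∑ j ∈ s, Q j l) l = ∑ j ∈ s, del (Q j) l := by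
  induction l generalizing Q with
  | nil => simp
  | cons y l ih => simp only [del_cons, ih, Finset.sum_sub_distrib]

lemma del_del (Q : List X → R) (l : List X) : del (del Q) l = 0 := by
  induction l generalizing Q with
  | nil => rfl
  | cons y l ih =>
    rw [del_cons]
    simp only [del_cons, del_sub]
    rw [show del (del fun l' => Q (y :: l')) l = 0 from ih _]
    ring

lemma del_map (g : X → Y) (Q : List Y → R) (l : List X) :
    del (fun l => Q (l.map g)) l = del Q (l.map g) := by
  induction l generalizing Q with
  | nil => rfl
  | cons y l ih =>
    simp only [del_cons, List.map_cons]
    rw [ih (fun l' => Q (g y :: l'))]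

/-- The Alexander–Whitney cup product of a cochain `e` of degree `n` with a cochain `c`. -/
def cup : ℕ → (List X → R) → (List X → R) → List X → R
  | 0, e, c => fun l => match l with
    | [] => 0
    | y :: l => e [y] * c (y :: l)
  | n + 1, e, c => fun l => match l with
    | [] => 0
    | y :: l => cup n (fun l' => e (y :: l')) c l

@[simp] lemma cup_nil (n : ℕ) (e c : List X → R) : cup n e c [] = 0 := by
  cases n <;> rfl

lemma cup_zero_cons (e c : List X → R) (y : X) (l : List X) :
    cup 0 e c (y :: l) = e [y] * c (y :: l) := rfl

lemma cup_succ_cons (n : ℕ) (e c : List X → R) (y : X) (l : List X) :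
    cup (n + 1) e c (y :: l) = cup n (fun l' => e (y :: l')) c l := rfl

lemma cup_sub_left (n : ℕ) (e e' c : List X → R) (l : List X) :
    cup n (fun l => e l - e' l) c l = cup n e c l - cup n e' c l := by
  induction n generalizing e e' l with
  | zero => cases l with
    | nil => simp
    | cons y l => simp only [cup_zero_cons]; ring
  | succ n ih => cases l with
    | nil => simp
    | cons y l => simp only [cup_succ_cons, ih]

lemma cup_sub_right (n : ℕ) (e c c' : List X → R) (l : List X) :
    cup n e (fun l => c l - c' l) l = cup n e c l - cup n e c' l := by
  induction n generalizing e l with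
  | zero => cases l with
    | nil => simp
    | cons y l => simp only [cup_zero_cons]; ring
  | succ n ih => cases l with
    | nil => simp
    | cons y l => simp only [cup_succ_cons, ih]

lemma cup_sum_left {J : Type*} (s : Finset J) (a : J → R) (n : ℕ) (e : J → List X → R)
    (c : List X → R) (l : List X) :
    cup n (fun l => ∑ j ∈ s, a j * e j l) c l = ∑ j ∈ s, a j * cup n (e j) c l := by
  induction n generalizing e l with
  | zero => cases l with
    | nil => simp
    | cons y l => simp only [cup_zero_cons, Finset.sum_mul]; simp only [mul_assoc]
  | succ n ih => cases l with
    | nil => simp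
    | cons y l => simp only [cup_succ_cons, ih]

lemma cup_zero_right (n : ℕ) (e : List X → R) (l : List X) : cup n e (fun _ => 0) l = 0 := by
  induction n generalizing e l with
  | zero => cases l <;> simp [cup_zero_cons]
  | succ n ih => cases l with
    | nil => simp
    | cons y l => simp only [cup_succ_cons, ih]

lemma cup_zero_left (n : ℕ) (c : List X → R) (l : List X) : cup n (fun _ => 0) c l = 0 := by
  induction n generalizing l with
  | zero => cases l <;> simp [cup_zero_cons]
  | succ n ih => cases l with
    | nil => simp
    | cons y l => simp only [cup_succ_cons, ih]

/-- The cup product is compatible with any map `A` that preserves both factors on sublists. -/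
lemma cup_map (n : ℕ) (e c : List Y → R) (e' c' : List X → R) (A : X → Y) (l : List X)
    (he : ∀ l', List.Sublist l' l → e (l'.map A) = e' l')
    (hc : ∀ l', List.Sublist l' l → c (l'.map A) = c' l') :
    cup n e c (l.map A) = cup n e' c' l := by
  induction n generalizing e e' l with
  | zero => cases l with
    | nil => simp
    | cons y l =>
      have h1 := he [y] (by simp)
      have h2 := hc (y :: l) (List.Sublist.refl _)
      simp only [List.map_cons, cup_zero_cons]
      simp only [List.map_cons, List.map_nil] at h1 h2
      rw [h1, h2]
  | succ n ih => cases l with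
    | nil => simp
    | cons y l =>
      simp only [List.map_cons, cup_succ_cons]
      refine ih _ _ l (fun l' hl' => ?_) (fun l' hl' => hc l' (hl'.trans (List.sublist_cons_self y l)))
      exact he (y :: l') (hl'.cons_cons y)

lemma cup_eq_zero_left (n : ℕ) (e c : List X → R) (l : List X)
    (he : ∀ l', List.Sublist l' l → e l' = 0) : cup n e c l = 0 := by
  induction n generalizing e l with
  | zero => cases l with
    | nil => simp
    | cons y l => rw [cup_zero_cons, he [y] (by simp), zero_mul]
  | succ n ih => cases l with
    | nil => simp
    | cons y l => exact ih _ l (fun l' hl' => he _ (hl'.cons_cons y))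

lemma cup_eq_zero_right (n : ℕ) (e c : List X → R) (l : List X)
    (hc : ∀ l', List.Sublist l' l → c l' = 0) : cup n e c l = 0 := by
  induction n generalizing e l with
  | zero => cases l with
    | nil => simp
    | cons y l => rw [cup_zero_cons, hc _ (List.Sublist.refl _), mul_zero]
  | succ n ih => cases l with
    | nil => simp
    | cons y l => exact ih _ l (fun l' hl' => hc _ (hl'.trans (List.sublist_cons_self y l)))

/-- The Leibniz rule. -/
lemma del_cup (n : ℕ) (e c : List X → R) (hc : c [] = 0) (l : List X) :
    del (cup n e c) l = cup (n + 1) (del e) c l + (-1) ^ n * cup n e (del c) l := by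
  induction n generalizing e l with
  | zero => cases l with
    | nil => simp
    | cons y l =>
      rw [del_cons, cup_succ_cons]
      simp only [cup_zero_cons]
      rw [del_mul, del_cons c]
      cases l with
      | nil => simp [hc]
      | cons y' l =>
        simp only [cup_zero_cons, del_cons, del_nil]
        ring
  | succ n ih => cases l with
    | nil => simp
    | cons y l =>
      rw [del_cons, cup_succ_cons, cup_succ_cons]
      have h1 : (del fun l' => cup (n + 1) e c (y :: l')) l = del (cup n (fun l' => e (y :: l')) c) l :=
        rfl
      have h2 : (fun l' => del e (y :: l')) = fun l' => e l' - del (fun l' => e (y :: l')) l' := rfl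
      rw [h1, ih, h2, cup_sub_left]
      ring

/-- The unit cochain for the cup product: the constant `1` in degree `0`. -/
def unitC : List X → R
  | [_] => 1
  | _ => 0

lemma unitC_map (A : X → Y) (l : List X) : unitC (l.map A) = (unitC l : R) := by
  rcases l with _ | ⟨a, _ | ⟨b, l⟩⟩ <;> rfl

lemma del_unitC (l : List X) : del (unitC : List X → R) l = 0 := by
  rcases l with _ | ⟨a, _ | ⟨b, _ | ⟨c, l⟩⟩⟩
  · rfl
  · simp [del_cons, unitC]
  · simp [del_cons, unitC]
  · apply del_eq_zero
    intro l' _ hlen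
    rcases l' with _ | ⟨a', _ | ⟨b', l'⟩⟩
    · rfl
    · simp at hlen
    · rfl

/-- Iterated cup product of cochains `e k` of degree `D`, over a list of indices. -/
def prodC {K : Type*} (D : ℕ) (e : K → List X → R) : List K → List X → R
  | [] => unitC
  | k :: ks => cup D (e k) (prodC D e ks)

@[simp] lemma prodC_nil_list {K : Type*} (D : ℕ) (e : K → List X → R) (ks : List K) :
    prodC D e ks [] = 0 := by
  cases ks
  · rfl
  · simp [prodC]

lemma del_prodC {K : Type*} (D : ℕ) (e : K → List X → R) (he : ∀ k l, del (e k) l = 0)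
    (ks : List K) (l : List X) : del (prodC D e ks) l = 0 := by
  induction ks generalizing l with
  | nil => exact del_unitC l
  | cons k ks ih =>
    rw [prodC, del_cup _ _ _ (by simp)]
    rw [show del (e k) = fun _ => 0 from funext (he k),
      show del (prodC D e ks) = fun _ => 0 from funext ih, cup_zero_left, cup_zero_right]
    simp

lemma prodC_map {K : Type*} (D : ℕ) (e : K → List Y → R) (e' : K → List X → R) (A : X → Y) (l : List X)
    (he : ∀ k l', List.Sublist l' l → e k (l'.map A) = e' k l') (ks : List K) :
    ∀ l', List.Sublist l' l → prodC D e ks (l'.map A) = prodC D e' ks l' := by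
  induction ks with
  | nil => intro l' _; exact unitC_map A l'
  | cons k ks ih =>
    intro l' hl'
    exact cup_map D _ _ _ _ A l' (fun l'' h => he k l'' (h.trans hl')) (fun l'' h => ih l'' (h.trans hl'))

lemma prodC_eq_zero {K : Type*} (D : ℕ) (e : K → List X → R) (ks : List K) (k : K) (hk : k ∈ ks)
    (l : List X) (he : ∀ l', List.Sublist l' l → e k l' = 0) : prodC D e ks l = 0 := by
  induction ks generalizing l with
  | nil => simp at hk
  | cons k' ks ih =>
    rcases List.mem_cons.1 hk with h | h
    · subst h; exact cup_eq_zero_left _ _ _ _ he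
    · exact cup_eq_zero_right _ _ _ _ (fun l' hl' => ih h l' (fun l'' h' => he l'' (h'.trans hl')))

/-- Replacing every factor of a product of cocycles by a cohomologous cocycle changes the product by
a coboundary; a property `Inv` that is inherited by cup products and differences carries over to
the cochain that bounds. -/
lemma prodC_cohom {K : Type*} (D : ℕ) (Inv : (List X → R) → Prop)
    (hsub : ∀ a c, Inv a → Inv c → Inv fun l => a l + c l)
    (hmul : ∀ (t : R) a, Inv a → Inv fun l => t * a l)
    (hcup : ∀ n a c, Inv a → Inv c → Inv (cup n a c))
    (hunit : Inv unitC)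
    (e e' b : K → List X → R)
    (he : ∀ k l, del (e k) l = 0) (he' : ∀ k l, del (e' k) l = 0)
    (hb : ∀ k l, e k l - e' k l = del (b k) l)
    (ie : ∀ k, Inv (e k)) (ie' : ∀ k, Inv (e' k)) (ib : ∀ k, Inv (b k)) (ks : List K) :
    ∃ Q : List X → R, Inv Q ∧ Q [] = 0 ∧
      ∀ l, prodC (D + 1) e ks l - prodC (D + 1) e' ks l = del Q l := by
  have ip : ∀ ks, Inv (prodC (D + 1) e' ks) := by
    intro ks
    induction ks with
    | nil => exact hunit
    | cons k ks ih => exact hcup _ _ _ (ie' k) ih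
  induction ks with
  | nil =>
    refine ⟨fun l => 0 * unitC l, hmul 0 _ hunit, by simp, fun l => ?_⟩
    rw [del_mul]
    simp [prodC]
  | cons k ks ih =>
    obtain ⟨Q, iQ, Q0, hQ⟩ := ih
    refine ⟨fun l => (-1) ^ (D + 1) * cup (D + 1) (e k) Q l + cup D (b k) (prodC (D + 1) e' ks) l,
      hsub _ _ (hmul _ _ (hcup _ _ _ (ie k) iQ)) (hcup _ _ _ (ib k) (ip ks)), by simp, fun l => ?_⟩
    rw [del_add, del_mul, del_cup _ _ _ Q0, del_cup _ _ _ (by simp)]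
    rw [show del (e k) = fun _ => 0 from funext (he k),
      show del (prodC (D + 1) e' ks) = fun _ => 0 from funext (del_prodC _ _ he' ks),
      cup_zero_left, cup_zero_right,
      show del (b k) = fun l => e k l - e' k l from funext fun l => (hb k l).symm,
      show del Q = fun l => prodC (D + 1) e ks l - prodC (D + 1) e' ks l from
        funext fun l => (hQ l).symm,
      cup_sub_left, cup_sub_right]
    simp only [prodC]
    have h1 : ((-1 : R) ^ (D + 1)) * (-1) ^ (D + 1) = 1 := by
      rw [← mul_pow]; simp
    linear_combination (cup (D + 1) (e k) (prodC (D + 1) e' ks) l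
      - cup (D + 1) (e k) (prodC (D + 1) e ks) l) * h1

end Cochains

/-! ### Barycentric subdivision of affine chains -/

section Subdivision

variable {R : Type*} [CommRing R] {E : Type*} [NormedAddCommGroup E] [NormedSpace ℝ E]

/-- The barycenter of a list of points. -/
def bary (l : List E) : E := (l.length : ℝ)⁻¹ • l.sum

/-- The dual of barycentric subdivision on tuples of length `n`: on chains, the subdivision of a
simplex is the cone from its barycenter over the subdivision of its boundary. -/
def sdN : ℕ → (List E → R) → List E → R
  | 0, c, _ => c []
  | n + 1, c, l => del (sdN n (fun l' => c (bary l :: l'))) l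

/-- The dual of barycentric subdivision. -/
def sd (c : List E → R) (l : List E) : R := sdN l.length c l

/-- The dual of the chain homotopy between subdivision and the identity, on tuples of
length `n`. -/
def htN : ℕ → (List E → R) → List E → R
  | 0, _, _ => 0
  | n + 1, c, l => c (bary l :: l) - del (htN n (fun l' => c (bary l :: l'))) l

/-- The dual of the chain homotopy between subdivision and the identity. -/
def ht (c : List E → R) (l : List E) : R := htN l.length c l

lemma sdN_sub (n : ℕ) (c c' : List E → R) (l : List E) :
    sdN n (fun l => c l - c' l) l = sdN n c l - sdN n c' l := by
  induction n generalizing c c' l with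
  | zero => rfl
  | succ n ih =>
    simp only [sdN]
    rw [← del_sub]
    congr 1
    funext l'
    exact ih _ _ _

lemma htN_sub (n : ℕ) (c c' : List E → R) (l : List E) :
    htN n (fun l => c l - c' l) l = htN n c l - htN n c' l := by
  induction n generalizing c c' l with
  | zero => simp [htN]
  | succ n ih =>
    simp only [htN]
    have : (htN n fun l' => c (bary l :: l') - c' (bary l :: l')) =
        fun l'' => htN n (fun l' => c (bary l :: l')) l'' - htN n (fun l' => c' (bary l :: l')) l'' :=
      funext fun l'' => ih _ _ _
    rw [this, del_sub]
    ring

lemma del_sdN (n : ℕ) (c : List E → R) (l : List E) (hl : l.length = n + 1) :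
    del (sdN n c) l = sdN (n + 1) (del c) l := by
  induction n generalizing c l with
  | zero =>
    obtain ⟨a, rfl⟩ := List.length_eq_one_iff.1 hl
    simp [sdN, del_cons]
  | succ n ih =>
    conv_rhs => rw [sdN]
    have h1 : (sdN (n + 1) fun l' => del c (bary l :: l')) =
        fun l'' => sdN (n + 1) c l'' - sdN (n + 1) (del fun l' => c (bary l :: l')) l'' := by
      funext l''
      simp only [del_cons]
      exact sdN_sub _ _ _ _
    rw [h1, del_sub]
    have h2 : del (sdN (n + 1) (del fun l' => c (bary l :: l'))) l = 0 := by
      rw [del_congr _ (del (sdN n fun l' => c (bary l :: l'))) l, del_del]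
      intro l' _ hlen
      exact (ih _ l' (by omega)).symm
    rw [h2, sub_zero]

/-- Subdivision is a cochain map. -/
lemma del_sd (c : List E → R) (l : List E) : del (sd c) l = sd (del c) l := by
  rcases hl : l.length with _ | n
  · obtain rfl := List.length_eq_zero_iff.1 hl
    simp [sd, sdN]
  · rw [sd, hl, ← del_sdN n c l hl]
    apply del_congr
    intro l' _ hlen
    rw [sd, show l'.length = n by omega]

lemma htN_del (n : ℕ) (c : List E → R) (l : List E) (hl : l.length = n + 1) :
    htN (n + 1) (del c) l = c l - sdN (n + 1) c l - del (htN n c) l := by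
  induction n generalizing c l with
  | zero =>
    obtain ⟨a, rfl⟩ := List.length_eq_one_iff.1 hl
    simp [sdN, htN, del_cons]
  | succ n ih =>
    rw [htN]
    have h1 : (htN (n + 1) fun l' => del c (bary l :: l')) =
        fun l'' => htN (n + 1) c l'' - htN (n + 1) (del fun l' => c (bary l :: l')) l'' := by
      funext l''
      simp only [del_cons]
      exact htN_sub _ _ _ _
    rw [h1, del_sub, del_cons]
    have h2 : del (htN (n + 1) (del fun l' => c (bary l :: l'))) l =
        del (fun l' => c (bary l :: l')) l - sdN (n + 2) c l := by
      rw [del_congr _ (fun l'' => (c (bary l :: l'') - sdN (n + 1) (fun l' => c (bary l :: l')) l'') -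
        del (htN n fun l' => c (bary l :: l')) l'') l, del_sub, del_del, sub_zero, del_sub]
      · rfl
      · intro l' _ hlen
        exact ih _ l' (by omega)
    rw [h2]
    ring

/-- A cochain and its subdivision differ by the homotopy formula. -/
lemma ht_del (c : List E → R) (l : List E) :
    ht (del c) l = c l - sd c l - del (ht c) l := by
  rcases hl : l.length with _ | n
  · obtain rfl := List.length_eq_zero_iff.1 hl
    simp [sd, sdN, ht, htN]
  · rw [sd, ht, hl, htN_del n c l hl]
    congr 1
    apply del_congr
    intro l' _ hlen
    rw [ht, show l'.length = n by omega]

lemma bary_mem {C : Set E} (hC : Convex ℝ C) (l : List E) (hl : l ≠ []) (h : ∀ y ∈ l, y ∈ C) :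
    bary l ∈ C := by
  have hpos : (0 : ℝ) < l.length := by
    have := List.length_pos_iff.2 hl
    exact_mod_cast this
  have : bary l = ∑ i : Fin l.length, (l.length : ℝ)⁻¹ • l.get i := by
    rw [← Finset.smul_sum, bary]
    congr 1
    conv_lhs => rw [← List.ofFn_get l]
    rw [List.sum_ofFn]
  rw [this]
  apply hC.sum_mem
  · intros; positivity
  · simp [hpos.ne']
  · intro i _
    exact h _ (List.get_mem l i)

lemma bary_map (A : E →ₗ[ℝ] E) (l : List E) : bary (l.map A) = A (bary l) := by
  simp [bary, map_list_sum]

lemma sdN_map (n : ℕ) (A : E →ₗ[ℝ] E) (c : List E → R) (l : List E) :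
    sdN n c (l.map A) = sdN n (fun l => c (l.map A)) l := by
  induction n generalizing c l with
  | zero => rfl
  | succ n ih =>
    simp only [sdN]
    rw [← del_map]
    congr 1
    funext l'
    rw [ih]
    simp [bary_map]

lemma htN_map (n : ℕ) (A : E →ₗ[ℝ] E) (c : List E → R) (l : List E) :
    htN n c (l.map A) = htN n (fun l => c (l.map A)) l := by
  induction n generalizing c l with
  | zero => rfl
  | succ n ih =>
    simp only [htN]
    rw [← del_map]
    congr 1
    · simp [bary_map]
    · congr 1
      funext l'
      rw [ih]
      simp [bary_map]

lemma sdN_congr {C : Set E} (hC : Convex ℝ C) (n : ℕ) (c c' : List E → R)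
    (h : ∀ l, (∀ y ∈ l, y ∈ C) → c l = c' l) (l : List E) (hl : ∀ y ∈ l, y ∈ C) :
    sdN n c l = sdN n c' l := by
  induction n generalizing c c' l with
  | zero => exact h [] (by simp)
  | succ n ih =>
    rcases eq_or_ne l [] with rfl | hne
    · rfl
    simp only [sdN]
    apply del_congr
    intro l' hl' _
    refine ih _ _ (fun l'' h'' => h _ ?_) l' (fun y hy => hl y (hl'.subset hy))
    intro y hy
    rcases List.mem_cons.1 hy with rfl | hy
    · exact bary_mem hC l hne hl
    · exact h'' y hy

lemma htN_congr {C : Set E} (hC : Convex ℝ C) (n : ℕ) (c c' : List E → R)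
    (h : ∀ l, (∀ y ∈ l, y ∈ C) → c l = c' l) (l : List E) (hl : ∀ y ∈ l, y ∈ C) (hn : l.length = n) :
    htN n c l = htN n c' l := by
  induction n generalizing c c' l with
  | zero => rfl
  | succ n ih =>
    have hne : l ≠ [] := by rintro rfl; simp at hn
    have hb := bary_mem hC l hne hl
    simp only [htN]
    congr 1
    · apply h
      intro y hy
      rcases List.mem_cons.1 hy with rfl | hy
      · exact hb
      · exact hl y hy
    · apply del_congr
      intro l' hl' hlen
      refine ih _ _ (fun l'' h'' => h _ ?_) l' (fun y hy => hl y (hl'.subset hy)) (by omega)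
      intro y hy
      rcases List.mem_cons.1 hy with rfl | hy
      · exact hb
      · exact h'' y hy

/-- All pairwise distances in the list are at most `r`. -/
def Small (r : ℝ) (l : List E) : Prop := ∀ x ∈ l, ∀ y ∈ l, dist x y ≤ r

lemma dist_bary_le (r : ℝ) (l : List E) (n : ℕ) (hl : l.length = n + 1) (hs : Small r l)
    (v : E) (hv : v ∈ l) : dist v (bary l) ≤ n / (n + 1) * r := by
  obtain ⟨i, rfl⟩ := List.mem_iff_get.1 hv
  have hpos : (0 : ℝ) < (n : ℝ) + 1 := by positivity
  have hlen : (l.length : ℝ) = n + 1 := by exact_mod_cast hl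
  have hb : bary l - l.get i = ((n : ℝ) + 1)⁻¹ • ∑ k : Fin l.length, (l.get k - l.get i) := by
    rw [Finset.sum_sub_distrib, smul_sub]
    congr 1
    · rw [bary, hlen]
      congr 1
      conv_lhs => rw [← List.ofFn_get l]
      rw [List.sum_ofFn]
    · simp only [Finset.sum_const, Finset.card_univ, Fintype.card_fin]
      rw [← Nat.cast_smul_eq_nsmul ℝ, hlen, smul_smul, inv_mul_cancel₀ hpos.ne', one_smul]
  rw [dist_comm, dist_eq_norm, hb, norm_smul, norm_inv, Real.norm_of_nonneg hpos.le]
  have hsum : ‖∑ k : Fin l.length, (l.get k - l.get i)‖ ≤ n * r := by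
    rw [← Finset.add_sum_erase _ _ (Finset.mem_univ i), sub_self, zero_add]
    refine (norm_sum_le _ _).trans ?_
    refine (Finset.sum_le_card_nsmul _ _ r fun k _ => ?_).trans ?_
    · rw [← dist_eq_norm]
      exact hs _ (List.get_mem l k) _ (List.get_mem l i)
    · rw [Finset.card_erase_of_mem (Finset.mem_univ i), Finset.card_univ, Fintype.card_fin, hl]
      simp
  calc ((n : ℝ) + 1)⁻¹ * _ ≤ ((n : ℝ) + 1)⁻¹ * (n * r) := by gcongr
    _ = _ := by ring

/-- Subdivision shrinks simplices: if a cochain vanishes on the tuples of length `n` in `C` of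
diameter at most `(n - 1) / n * r`, its subdivision vanishes on those of diameter at most `r`. -/
lemma sdN_eq_zero (n : ℕ) (C : Set E) (hC : Convex ℝ C) (r : ℝ) (hr : 0 ≤ r) (c : List E → R)
    (hc : ∀ l, (∀ y ∈ l, y ∈ C) → l.length = n → Small ((n - 1) / n * r) l → c l = 0)
    (l : List E) (hl : ∀ y ∈ l, y ∈ C) (hn : l.length = n) (hs : Small r l) : sdN n c l = 0 := by
  induction n generalizing C c l with
  | zero =>
    exact hc [] (by simp) rfl (by simp [Small])
  | succ n ih =>
    simp only [sdN]
    apply del_eq_zero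
    intro l' hl' hlen
    have hlC : convexHull ℝ {y | y ∈ l} ⊆ C := convexHull_min hl hC
    have hne : l ≠ [] := by rintro rfl; simp at hn
    refine ih (convexHull ℝ {y | y ∈ l}) (convex_convexHull ℝ _) _ ?_ l'
      (fun y hy => subset_convexHull ℝ _ (hl'.subset hy)) (by omega)
      (fun x hx y hy => hs x (hl'.subset hx) y (hl'.subset hy))
    intro l'' h'' hlen'' hs''
    have hbm : bary l ∈ convexHull ℝ {y | y ∈ l} :=
      bary_mem (convex_convexHull ℝ _) l hne (fun y hy => subset_convexHull ℝ _ hy)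
    have hball : convexHull ℝ {y | y ∈ l} ⊆ Metric.closedBall (bary l) (n / (n + 1) * r) :=
      convexHull_min (fun v hv => dist_bary_le r l n hn hs v hv) (convex_closedBall _ _)
    have hnn : (0 : ℝ) ≤ n / (n + 1) * r := by positivity
    have hle : ((n : ℝ) - 1) / n * r ≤ n / (n + 1) * r := by
      refine mul_le_mul_of_nonneg_right ?_ hr
      rcases Nat.eq_zero_or_pos n with rfl | hpos
      · simp
      · have : (0 : ℝ) < n := by exact_mod_cast hpos
        rw [div_le_div_iff₀ this (by positivity)]
        nlinarith
    apply hc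
    · intro y hy
      rcases List.mem_cons.1 hy with rfl | hy
      · exact hlC hbm
      · exact hlC (h'' y hy)
    · simp [hlen'']
    · have e : ((n + 1 : ℕ) - 1 : ℝ) / (n + 1 : ℕ) * r = n / (n + 1) * r := by push_cast; ring
      rw [e]
      intro x hx y hy
      rcases List.mem_cons.1 hx with rfl | hx <;> rcases List.mem_cons.1 hy with rfl | hy
      · simpa using hnn
      · rw [dist_comm]; exact hball (h'' y hy)
      · exact hball (h'' x hx)
      · exact (hs'' x hx y hy).trans hle

lemma sd_iterate_eq_zero (N n : ℕ) (C : Set E) (hC : Convex ℝ C) (r : ℝ) (hr : 0 ≤ r)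
    (hn1 : 1 ≤ n) (c : List E → R)
    (hc : ∀ l, (∀ y ∈ l, y ∈ C) → l.length = n → Small (((n - 1) / n) ^ N * r) l → c l = 0)
    (l : List E) (hl : ∀ y ∈ l, y ∈ C) (hn : l.length = n) (hs : Small r l) : (sd^[N] c) l = 0 := by
  induction N generalizing c with
  | zero => exact hc l hl hn (by simpa using hs)
  | succ N ih =>
    rw [Function.iterate_succ_apply]
    apply ih
    intro l' hl' hn' hs'
    have h1 : (1 : ℝ) ≤ n := by exact_mod_cast hn1
    have h0 : (0 : ℝ) ≤ (n - 1) / n := div_nonneg (by linarith) (by linarith)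
    rw [sd, hn']
    refine sdN_eq_zero n C hC _ (by positivity) c ?_ l' hl' hn' hs'
    intro l'' h'' hn'' hs''
    refine hc l'' h'' hn'' ?_
    rwa [← mul_assoc, ← pow_succ'] at hs''

/-- Invariance of a cochain under a family of linear maps, on the tuples that lie in a single
cell of a given collection. -/
def Inv {S : Type*} (act : S → E →ₗ[ℝ] E) (cells : Set (Set E)) (c : List E → R) : Prop :=
  ∀ s, ∀ C ∈ cells, ∀ l, (∀ y ∈ l, y ∈ C) → c (l.map (act s)) = c l

variable {S : Type*} {act : S → E →ₗ[ℝ] E} {cells : Set (Set E)}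

lemma Inv.sd (hC : ∀ C ∈ cells, Convex ℝ C) {c : List E → R} (h : Inv act cells c) :
    Inv act cells (sd c) := by
  intro s C hCm l hl
  rw [VKF.sd, VKF.sd, List.length_map, sdN_map]
  exact sdN_congr (hC C hCm) _ _ _ (fun l hl => h s C hCm l hl) l hl

lemma Inv.ht (hC : ∀ C ∈ cells, Convex ℝ C) {c : List E → R} (h : Inv act cells c) :
    Inv act cells (ht c) := by
  intro s C hCm l hl
  rw [VKF.ht, VKF.ht, List.length_map, htN_map]
  exact htN_congr (hC C hCm) _ _ _ (fun l hl => h s C hCm l hl) l hl rfl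

lemma Inv.cup (n : ℕ) {a c : List E → R} (ha : Inv act cells a) (hc : Inv act cells c) :
    Inv act cells (cup n a c) := by
  intro s C hCm l hl
  exact cup_map n _ _ _ _ (act s) l (fun l' hl' => ha s C hCm l' fun y hy => hl y (hl'.subset hy))
    (fun l' hl' => hc s C hCm l' fun y hy => hl y (hl'.subset hy))

/-- A functional that kills coboundaries of invariant cochains does not see subdivision of an
invariant cocycle. -/
lemma functional_sd_iterate (hC : ∀ C ∈ cells, Convex ℝ C) (z : (List E → R) → R)
    (hz : ∀ c c', z (fun l => c l - c' l) = z c - z c')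
    (hzd : ∀ Q, Inv act cells Q → z (del Q) = 0)
    (N : ℕ) (c : List E → R) (hc : ∀ l, del c l = 0) (hi : Inv act cells c) :
    z (sd^[N] c) = z c := by
  induction N generalizing c with
  | zero => rfl
  | succ N ih =>
    rw [Function.iterate_succ_apply, ih]
    · have h : (fun l => c l - sd c l) = del (ht c) := by
        funext l
        have h1 := ht_del c l
        have h2 : ht (del c) l = 0 := by
          rw [show del c = fun _ => 0 - 0 from funext fun l => by simp [hc l]]
          simp only [ht]
          rw [htN_sub]
          ring
        rw [h2] at h1
        linear_combination -h1
      have h2 := hz c (sd c)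
      rw [h, hzd _ (hi.ht hC)] at h2
      exact (sub_eq_zero.1 h2.symm).symm
    · intro l
      rw [del_sd, show del c = fun _ => 0 - 0 from funext fun l => by simp [hc l], sd, sdN_sub]
      ring
    · exact hi.sd hC

end Subdivision

/-! ### The fundamental chain of a product of joins -/

section Staircase

variable {p : ℕ} {ι : Type} [Fintype ι] [LinearOrder ι]

/-- A vertex of the staircase triangulation of the product over `j` of the joins
`ℤ/p * ⋯ * ℤ/p` (with `M j + 1` factors): a position in the grid and a group element in each
coordinate. -/
abbrev Vert (p : ℕ) (ι : Type) := (ι → ℕ) × (ι → ZMod p)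

/-- One step in direction `j` which adds `g` to the `j`-th group element. -/
def step (x : Vert p ι) (j : ι) (g : ZMod p) : Vert p ι :=
  (Function.update x.1 j (x.1 j + 1), Function.update x.2 j (x.2 j + g))

/-- The shuffle sign of a step in direction `j` from position `i`. -/
def sgn (M i : ι → ℕ) (j : ι) : ZMod p := (-1) ^ (∑ j' with j' < j, (M j' - i j'))

/-- Evaluation of a cochain on the weighted sum of all staircase paths with `n` steps from `x`.
A step that leaves position `q` in some direction and adds `g` there has weight `ω q g`. -/
def Z (M : ι → ℕ) (ω : ℕ → ZMod p → ZMod p) [NeZero p] :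
    ℕ → Vert p ι → (List (Vert p ι) → ZMod p) → ZMod p
  | 0, x, c => c [x]
  | n + 1, x, c => ∑ j, if x.1 j < M j then
      sgn M x.1 j * ∑ g, ω (x.1 j) g * Z M ω n (step x j g) (fun l => c (x :: l)) else 0

variable [NeZero p] {M : ι → ℕ} {ω : ℕ → ZMod p → ZMod p}

lemma Z_sub (n : ℕ) (x : Vert p ι) (c c' : List (Vert p ι) → ZMod p) :
    Z M ω n x (fun l => c l - c' l) = Z M ω n x c - Z M ω n x c' := by
  induction n generalizing x c c' with
  | zero => rfl
  | succ n ih =>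
    simp only [Z]
    rw [← Finset.sum_sub_distrib]
    refine Finset.sum_congr rfl fun j _ => ?_
    split_ifs
    · rw [← mul_sub, ← Finset.sum_sub_distrib]
      congr 1
      refine Finset.sum_congr rfl fun g _ => ?_
      rw [ih, mul_sub]
    · simp

lemma Z_mul (n : ℕ) (x : Vert p ι) (a : ZMod p) (c : List (Vert p ι) → ZMod p) :
    Z M ω n x (fun l => a * c l) = a * Z M ω n x c := by
  induction n generalizing x c with
  | zero => rfl
  | succ n ih =>
    simp only [Z, ih, Finset.mul_sum, mul_ite, mul_zero]
    refine Finset.sum_congr rfl fun j _ => ?_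
    split_ifs
    · refine Finset.sum_congr rfl fun g _ => by ring
    · rfl

lemma Z_zero (n : ℕ) (x : Vert p ι) : Z M ω n x (fun _ => 0) = 0 := by
  have := Z_mul (M := M) (ω := ω) n x 0 (fun _ => 0)
  simpa using this

lemma Z_sum {J : Type*} (s : Finset J) (n : ℕ) (x : Vert p ι) (c : J → List (Vert p ι) → ZMod p) :
    Z M ω n x (fun l => ∑ j ∈ s, c j l) = ∑ j ∈ s, Z M ω n x (c j) := by
  classical
  induction s using Finset.induction_on with
  | empty => simpa using Z_zero n x
  | insert a s ha ih =>
    rw [Finset.sum_insert ha, ← ih]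
    have := Z_sub (M := M) (ω := ω) n x (fun l => ∑ j ∈ insert a s, c j l) (fun l => ∑ j ∈ s, c j l)
    simp only [Finset.sum_insert ha, add_sub_cancel_right] at this
    rw [this]
    simp [Finset.sum_insert ha]

/-- The relation between consecutive vertices of a staircase path. -/
def Step (M : ι → ℕ) (x y : Vert p ι) : Prop := ∃ j g, x.1 j < M j ∧ y = step x j g

lemma Z_congr (n : ℕ) (x : Vert p ι) (c c' : List (Vert p ι) → ZMod p)
    (h : ∀ l, l.length = n → List.IsChain (Step M) (x :: l) → c (x :: l) = c' (x :: l)) :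
    Z M ω n x c = Z M ω n x c' := by
  induction n generalizing x c c' with
  | zero => exact h [] rfl (by simp)
  | succ n ih =>
    simp only [Z]
    refine Finset.sum_congr rfl fun j _ => ?_
    split_ifs with hj
    · congr 1
      refine Finset.sum_congr rfl fun g _ => ?_
      congr 1
      apply ih
      intro l hlen hl
      exact h _ (by simp [hlen]) (List.isChain_cons_cons.2 ⟨⟨j, g, hj, rfl⟩, hl⟩)
    · rfl

lemma Z_congr_head (n : ℕ) (x : Vert p ι) (c c' : List (Vert p ι) → ZMod p)
    (h : ∀ l, c (x :: l) = c' (x :: l)) : Z M ω n x c = Z M ω n x c' :=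
  Z_congr n x c c' fun l _ _ => h l

/-- Translation of the group elements of a vertex. -/
def tr (s : ι → ZMod p) (x : Vert p ι) : Vert p ι := (x.1, x.2 + s)

lemma step_tr (s : ι → ZMod p) (x : Vert p ι) (j : ι) (g : ZMod p) :
    step (tr s x) j g = tr s (step x j g) := by
  refine Prod.ext rfl ?_
  funext k
  rcases eq_or_ne k j with rfl | h
  · simp [step, tr]; ring
  · simp [step, tr, h]

lemma Z_tr (n : ℕ) (s : ι → ZMod p) (x : Vert p ι) (c : List (Vert p ι) → ZMod p) :
    Z M ω n (tr s x) c = Z M ω n x (fun l => c (l.map (tr s))) := by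
  induction n generalizing x c with
  | zero => rfl
  | succ n ih =>
    simp only [Z, step_tr, ih]
    rfl

lemma sgn_update (i : ι → ℕ) (j j' : ι) (hj : i j < M j) :
    (sgn M (Function.update i j (i j + 1)) j' : ZMod p) =
      if j < j' then - sgn M i j' else sgn M i j' := by
  have h : ∑ k with k < j', (M k - i k) =
      ∑ k with k < j', (M k - Function.update i j (i j + 1) k) + if j < j' then 1 else 0 := by
    have : (if j < j' then 1 else 0) = ∑ k with k < j', if k = j then 1 else 0 := by
      rw [Finset.sum_ite_eq']
      simp
    rw [this, ← Finset.sum_add_distrib]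
    refine Finset.sum_congr rfl fun k _ => ?_
    rcases eq_or_ne k j with rfl | hk
    · simp; omega
    · simp [hk]
  unfold sgn
  rw [h]
  split_ifs <;> simp [pow_succ]

/-- The boundary of the chain of staircase paths from `x` consists of the paths with the initial
vertex removed: the other faces cancel, in pairs where the direction changes and by the two
conditions on the weights where it does not. -/
lemma Z_del (W1 : ∀ q, ∑ g, ω q g = 0) (W2 : ∀ q h, ∑ g, ω q g * ω (q + 1) (h - g) = 0)
    (n : ℕ) (x : Vert p ι) (hx : ∑ j, (M j - x.1 j) = n + 1) (Q : List (Vert p ι) → ZMod p) :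
    Z M ω (n + 1) x (del Q) = ∑ j, if x.1 j < M j then
      sgn M x.1 j * ∑ g, ω (x.1 j) g * Z M ω n (step x j g) Q else 0 := by
  induction n generalizing x Q with
  | zero =>
    simp only [Z, del_cons, del_nil]
    refine Finset.sum_congr rfl fun j _ => ?_
    simp only [mul_sub, Finset.sum_sub_distrib]
    rw [← Finset.sum_mul, W1]
    simp
  | succ n ih =>
    rw [Z]
    simp only [del_cons]
    have key : ∑ j, (if x.1 j < M j then sgn M x.1 j * ∑ g, ω (x.1 j) g *
        Z M ω (n + 1) (step x j g) (del fun l => Q (x :: l)) else 0) = 0 := by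
      have hcap : ∀ j g, x.1 j < M j → ∑ k, (M k - (step x j g).1 k) = n + 1 := by
        intro j g hj
        have : ∑ k, (M k - x.1 k) = ∑ k, (M k - (step x j g).1 k) + ∑ k, if k = j then 1 else 0 := by
          rw [← Finset.sum_add_distrib]
          refine Finset.sum_congr rfl fun k _ => ?_
          rcases eq_or_ne k j with rfl | hk
          · simp [step]; omega
          · simp [step, hk]
        rw [Finset.sum_ite_eq'] at this
        simp at this
        omega
      have h1 : ∀ j, (if x.1 j < M j then sgn M x.1 j * ∑ g, ω (x.1 j) g *
          Z M ω (n + 1) (step x j g) (del fun l => Q (x :: l)) else 0) =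
          ∑ j', if x.1 j < M j then sgn M x.1 j * ∑ g, ω (x.1 j) g *
            (if (step x j g).1 j' < M j' then sgn M (step x j g).1 j' * ∑ g',
              ω ((step x j g).1 j') g' *
                Z M ω n (step (step x j g) j' g') (fun l => Q (x :: l)) else 0) else 0 := by
        intro j
        split_ifs with hj
        · rw [← Finset.mul_sum, Finset.sum_comm]
          congr 1
          refine Finset.sum_congr rfl fun g _ => ?_
          rw [← Finset.mul_sum, ih _ (hcap j g hj)]
        · simp
      have hz : ∀ j, (if x.1 j < M j then sgn M x.1 j * ∑ g, ω (x.1 j) g *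
        (if (step x j g).1 j < M j then sgn M (step x j g).1 j * ∑ g',
          ω ((step x j g).1 j) g' *
            Z M ω n (step (step x j g) j g') (fun l => Q (x :: l)) else 0) else 0) = 0 := by
        intro j
        split_ifs with hj
        · have h2 : ∀ g, (step x j g).1 = Function.update x.1 j (x.1 j + 1) := fun g => rfl
          simp only [h2]
          split_ifs with hj'
          · have h3 : ∀ g g', step (step x j g) j g' = step (step x j (g + g')) j 0 := by
              intro g g'
              refine Prod.ext ?_ ?_ <;> simp [step]
              ring_nf
            have h4 : ∑ g, ω (x.1 j) g * (sgn M (Function.update x.1 j (x.1 j + 1)) j *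
                ∑ g', ω (Function.update x.1 j (x.1 j + 1) j) g' *
                  Z M ω n (step (step x j g) j g') (fun l => Q (x :: l))) =
                sgn M (Function.update x.1 j (x.1 j + 1)) j * ∑ h, ∑ g, (ω (x.1 j) g *
                ω (x.1 j + 1) (h - g)) * Z M ω n (step (step x j h) j 0) (fun l => Q (x :: l)) := by
              rw [Finset.sum_comm, Finset.mul_sum]
              refine Finset.sum_congr rfl fun g _ => ?_
              rw [mul_left_comm]
              congr 1
              rw [Finset.mul_sum]
              rw [← Equiv.sum_comp (Equiv.subRight g) (fun g' => ω (x.1 j) g * (ω (Function.update x.1 j (x.1 j + 1) j) g' *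
                  Z M ω n (step (step x j g) j g') (fun l => Q (x :: l))))]
              refine Finset.sum_congr rfl fun h _ => ?_
              rw [h3]
              simp [mul_assoc]
            rw [h4]
            simp only [← Finset.sum_mul, W2]
            simp
          · simp
        · rfl
      rw [Finset.sum_congr rfl fun j _ => h1 j, ← Finset.sum_product']
      refine Finset.sum_involution (fun a _ => (a.2, a.1)) ?_ ?_ (by simp) (by simp)
      · rintro ⟨j, j'⟩ -
        simp only
        rcases eq_or_ne j j' with rfl | hne
        · rw [hz j, add_zero]
        · have h2 : ∀ g, (step x j g).1 = Function.update x.1 j (x.1 j + 1) := fun g => rfl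
          have h2' : ∀ g, (step x j' g).1 = Function.update x.1 j' (x.1 j' + 1) := fun g => rfl
          simp only [h2, h2', Function.update_of_ne hne, Function.update_of_ne hne.symm]
          by_cases hj : x.1 j < M j
          swap
          · simp [hj]
          by_cases hj' : x.1 j' < M j'
          swap
          · simp [hj']
          simp only [hj, hj', if_true]
          rw [sgn_update _ _ _ hj, sgn_update _ _ _ hj']
          have h3 : ∀ g g', step (step x j' g') j g = step (step x j g) j' g' := by
            intro g g'
            refine Prod.ext ?_ ?_
            · simp only [step, Function.update_of_ne hne, Function.update_of_ne hne.symm]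
              rw [Function.update_comm hne]
            · simp only [step, Function.update_of_ne hne, Function.update_of_ne hne.symm]
              rw [Function.update_comm hne]
          have h4 : ∑ g, ∑ g', ω (x.1 j') g * (ω (x.1 j) g' *
              Z M ω n (step (step x j' g) j g') (fun l => Q (x :: l))) =
              ∑ g, ∑ g', ω (x.1 j) g * (ω (x.1 j') g' *
              Z M ω n (step (step x j g) j' g') (fun l => Q (x :: l))) := by
            rw [Finset.sum_comm]
            refine Finset.sum_congr rfl fun g _ => Finset.sum_congr rfl fun g' _ => ?_
            rw [h3]; ring
          have h5 : ∀ (s t : ZMod p) (u : ZMod p → ZMod p) (w : ZMod p → ZMod p → ZMod p),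
              s * ∑ g, u g * (t * ∑ g', w g g') = s * t * ∑ g, ∑ g', u g * w g g' := by
            intro s t u w
            simp only [Finset.mul_sum]
            refine Finset.sum_congr rfl fun g _ => Finset.sum_congr rfl fun g' _ => by ring
          rw [h5, h5, h4, ← add_mul]
          rcases lt_or_gt_of_ne hne with h | h
          · simp only [h, not_lt_of_gt h, if_true, if_false]; ring
          · simp only [h, not_lt_of_gt h, if_true, if_false]; ring
      · rintro ⟨j, j'⟩ - hne heq
        simp only [Prod.mk.injEq] at heq
        obtain ⟨rfl, -⟩ := heq
        exact hne (hz _)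
    refine Eq.trans ?_ (sub_zero _)
    rw [← key, ← Finset.sum_sub_distrib]
    refine Finset.sum_congr rfl fun j _ => ?_
    split_ifs
    · rw [← mul_sub, ← Finset.sum_sub_distrib]
      congr 1
      refine Finset.sum_congr rfl fun g _ => ?_
      rw [Z_sub, mul_sub]
    · simp

/-- Along the orbit of a direction the weights sum to zero, so that the staircase chain from the
origin annihilates coboundaries of translation invariant cochains. -/
lemma Z_del_inv (W1 : ∀ q, ∑ g, ω q g = 0) (W2 : ∀ q h, ∑ g, ω q g * ω (q + 1) (h - g) = 0)
    (n : ℕ) (hx : ∑ j, M j = n + 1) (Q : List (Vert p ι) → ZMod p)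
    (hQ : ∀ s l, List.IsChain (Step M) ((0, 0) :: l) → Q (l.map (tr s)) = Q l) :
    Z M ω (n + 1) ((0, 0) : Vert p ι) (del Q) = 0 := by
  rw [Z_del W1 W2 n _ (by simpa using hx)]
  refine Finset.sum_eq_zero fun j _ => ?_
  split_ifs with hj
  · have h : ∀ g, Z M ω n (step ((0, 0) : Vert p ι) j g) Q = Z M ω n (step (0, 0) j 0) Q := by
      intro g
      have h1 : step ((0, 0) : Vert p ι) j g = tr (Pi.single j g) (step (0, 0) j 0) := by
        refine Prod.ext rfl ?_
        funext k
        rcases eq_or_ne k j with rfl | h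
        · simp [step, tr]
        · simp [step, tr, h]
      rw [h1, Z_tr]
      exact Z_congr _ _ _ _ fun l _ hl =>
        hQ _ _ (List.isChain_cons_cons.2 ⟨⟨j, 0, hj, rfl⟩, hl⟩)
    simp only [h, ← Finset.sum_mul, W1]
    simp
  · rfl

end Staircase

/-! ### Bockstein cocycles -/

/-- A translation invariant normalized cocycle `β` on `ℤ/p`, of degree `D = D' + 1`, which represents
a generator of the polynomial part of the cohomology of `ℤ/p`, together with the weights `ω` of the
dual cycle. The degree is `1` for `p = 2` and `2` for odd `p`. -/
structure Bock (p : ℕ) [NeZero p] where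
  /-- One less than the degree. -/
  D' : ℕ
  /-- The cocycle. -/
  β : List (ZMod p) → ZMod p
  /-- The weights of the dual cycle. -/
  ω : ℕ → ZMod p → ZMod p
  deg : D' + 1 = if p = 2 then 1 else 2
  W1 : ∀ q, ∑ g, ω q g = 0
  W2 : ∀ q h, ∑ g, ω q g * ω (q + 1) (h - g) = 0
  del_β : ∀ l, del β l = 0
  β_add : ∀ s l, β (l.map (· + s)) = β l
  close : ∀ g l, (∀ a ∈ l, a = g ∨ (p ≠ 2 ∧ a = g + 1)) → β l = 0
  cmp : ∀ {X ι : Type} [Fintype ι] (ψ : X → ZMod p) (φ : ι → X → ZMod p) (a : ι → ZMod p),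
    ∃ b : List X → ZMod p, (∀ l, β (l.map ψ) - ∑ j, a j * β (l.map (φ j)) = del b l) ∧
      ∀ (A : X → X) (t : ι → ZMod p) (l : List X),
        (∀ y ∈ l, ψ (A y) = ψ y + ∑ j, a j * t j ∧ ∀ j, φ j (A y) = φ j y + t j) →
          b (l.map A) = b l
  block : ∀ {ι : Type} [Fintype ι] [LinearOrder ι] (M : ι → ℕ) (n : ℕ) (x : Vert p ι) (j : ι)
    (c : List (Vert p ι) → ZMod p) (v : ZMod p), (D' + 1) ∣ x.1 j →
    (x.1 j + (D' + 1) ≤ M j →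
      ∀ y : Vert p ι, y.1 = Function.update x.1 j (x.1 j + (D' + 1)) → Z M ω n y c = v) →
    Z M ω (n + (D' + 1)) x (cup (D' + 1) (fun l => β (l.map fun y => y.2 j)) c) =
      if x.1 j + (D' + 1) ≤ M j then v else 0

/-- A function of two points as a cochain of degree one. -/
def two {X R : Type} [Zero R] (T : X → X → R) : List X → R
  | [a, b] => T a b
  | _ => 0

/-- A function of three points as a cochain of degree two. -/
def three {X R : Type} [Zero R] (T : X → X → X → R) : List X → R
  | [a, b, c] => T a b c
  | _ => 0

/-- A function of one point as a cochain of degree zero. -/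
def one' {X R : Type} [Zero R] (T : X → R) : List X → R
  | [a] => T a
  | _ => 0

lemma one'_ne {X R : Type} [Zero R] (T : X → R) (l : List X) (h : l.length ≠ 1) : one' T l = 0 := by
  rcases l with _ | ⟨a, _ | ⟨b, l⟩⟩ <;> simp_all [one']

lemma two_ne {X R : Type} [Zero R] (T : X → X → R) (l : List X) (h : l.length ≠ 2) :
    two T l = 0 := by
  rcases l with _ | ⟨a, _ | ⟨b, _ | ⟨c, l⟩⟩⟩ <;> simp_all [two]

lemma three_ne {X R : Type} [Zero R] (T : X → X → X → R) (l : List X) (h : l.length ≠ 3) :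
    three T l = 0 := by
  rcases l with _ | ⟨a, _ | ⟨b, _ | ⟨c, _ | ⟨d, l⟩⟩⟩⟩ <;> simp_all [three]

lemma del_one' {X R : Type} [CommRing R] (T : X → R) :
    del (one' T) = two (fun a b => T b - T a) := by
  funext l
  by_cases h : l.length = 2
  · obtain ⟨a, b, rfl⟩ := List.length_eq_two.1 h
    simp [del_cons, one', two]
  · rw [two_ne _ _ h]
    exact del_eq_zero _ _ fun l' _ hl => one'_ne _ _ (by omega)

lemma del_two {X R : Type} [CommRing R] (T : X → X → R) :
    del (two T) = three (fun a b c => T b c - T a c + T a b) := by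
  funext l
  by_cases h : l.length = 3
  · obtain ⟨a, b, c, rfl⟩ := List.length_eq_three.1 h
    simp [del_cons, two, three]
    ring
  · rw [three_ne _ _ h]
    exact del_eq_zero _ _ fun l' _ hl => two_ne _ _ (by omega)

lemma del_two_eq_zero {X R : Type} [CommRing R] (T : X → X → R)
    (h : ∀ a b c, T b c - T a c + T a b = 0) (l : List X) : del (two T) l = 0 := by
  rw [del_two]
  rcases l with _ | ⟨a, _ | ⟨b, _ | ⟨c, _ | ⟨d, l⟩⟩⟩⟩ <;> simp [three, h]

lemma del_three_eq_zero {X R : Type} [CommRing R] (T : X → X → X → R)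
    (h : ∀ a b c d, T b c d - T a c d + T a b d - T a b c = 0) (l : List X) :
    del (three T) l = 0 := by
  by_cases hl : l.length = 4
  · rcases l with _ | ⟨a, _ | ⟨b, _ | ⟨c, _ | ⟨d, _ | ⟨e, l⟩⟩⟩⟩⟩ <;> simp at hl
    simp only [del_cons, three, del_nil]
    linear_combination h a b c d
  · exact del_eq_zero _ _ fun l' _ hl => three_ne _ _ (by omega)

/-- The Bockstein data for `p = 2`. -/
def bock2 : Bock 2 where
  D' := 0
  β := two fun a b => b - a
  ω _ _ := 1
  deg := rfl
  W1 _ := by decide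
  W2 _ _ := by simp; decide
  del_β := del_two_eq_zero _ fun a b c => by ring
  β_add s l := by
    rcases l with _ | ⟨a, _ | ⟨b, _ | ⟨c, l⟩⟩⟩ <;> simp [two]
  close g l h := by
    rcases l with _ | ⟨a, _ | ⟨b, _ | ⟨c, l⟩⟩⟩ <;> simp_all [two]
  cmp ψ φ a := by
    refine ⟨one' fun y => ψ y - ∑ j, a j * φ j y, fun l => ?_, fun A t l h => ?_⟩
    · rw [del_one']
      rcases l with _ | ⟨y, _ | ⟨z, _ | ⟨c, l⟩⟩⟩ <;> simp [two]
      simp only [mul_sub, Finset.sum_sub_distrib]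
      ring
    · rcases l with _ | ⟨y, _ | ⟨z, l⟩⟩ <;> simp [one']
      obtain ⟨h1, h2⟩ := h y (by simp)
      rw [h1]
      simp only [h2, mul_add, Finset.sum_add_distrib]
      ring
  block {ι} _ _ M n x j c v hx hv := by
    have hs : ∀ k : ι, (sgn M x.1 k : ZMod 2) = 1 := by
      intro k
      rw [sgn, show (-1 : ZMod 2) = 1 from by decide, one_pow]
    have hc : ∀ k g, Z M (fun _ _ => 1) n (step x k g) (fun l => cup 1
        (fun l => two (fun a b => b - a) (l.map fun y => y.2 j)) c (x :: l)) =
        ((step x k g).2 j - x.2 j) * Z M (fun _ _ => 1) n (step x k g) c := by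
      intro k g
      rw [← Z_mul]
      apply Z_congr_head
      intro l
      rw [cup_succ_cons, cup_zero_cons]
      rfl
    simp only [zero_add] at hv ⊢
    rw [Z, Finset.sum_eq_single j]
    · split_ifs with h2 h3 h3
      · have h1 : ∀ g, Z M (fun _ _ => 1) n (step x j g) c = v := fun g => hv h3 _ rfl
        simp only [hc, hs, h1]
        simp only [step, Function.update_self]
        simp
        rw [show (Finset.univ : Finset (ZMod 2)) = {0, 1} from rfl]
        simp
      · omega
      · omega
      · rfl
    · intro k _ hk
      simp only [hc]
      simp [step, Function.update_of_ne hk.symm]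
    · simp

section Odd

variable {p : ℕ} [Fact p.Prime]

/-- The defect of additivity of the least absolute residue, divided by `p`. -/
def carry (a b c : ZMod p) : ℤ :=
  ((b - a).valMinAbs + (c - b).valMinAbs - (c - a).valMinAbs) / p

lemma carry_spec (a b c : ZMod p) :
    (p : ℤ) * carry a b c = (b - a).valMinAbs + (c - b).valMinAbs - (c - a).valMinAbs := by
  apply Int.mul_ediv_cancel'
  rw [← ZMod.intCast_zmod_eq_zero_iff_dvd]
  push_cast
  simp

lemma carry_eq_zero (a b : ZMod p) : carry a a b = 0 ∧ carry a b b = 0 := by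
  have hp : (p : ℤ) ≠ 0 := by exact_mod_cast (Fact.out : p.Prime).ne_zero
  constructor <;> refine (mul_eq_zero.1 ?_).resolve_left hp <;> rw [carry_spec] <;> simp

lemma valMinAbs_one (hp2 : p ≠ 2) : (1 : ZMod p).valMinAbs = 1 := by
  have h3 : 3 ≤ p := by
    have := (Fact.out : p.Prime).two_le
    omega
  have : ((1 : ℤ) : ZMod p) = 1 := by simp
  exact (ZMod.valMinAbs_spec _ _).2 ⟨by simp, by constructor <;> omega⟩

lemma valMinAbs_neg_one (hp2 : p ≠ 2) : (-1 : ZMod p).valMinAbs = -1 := by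
  have h3 : 3 ≤ p := by
    have := (Fact.out : p.Prime).two_le
    omega
  exact (ZMod.valMinAbs_spec _ _).2 ⟨by simp, by constructor <;> omega⟩

/-- The integer `n` divided by `p`, for `n` that represents zero. -/
lemma exists_carry {X ι : Type} [Fintype ι] (ψ : X → ZMod p) (φ : ι → X → ZMod p) (a : ι → ZMod p)
    (y z : X) : (p : ℤ) * (((ψ z - ψ y).valMinAbs - ∑ j, (a j).valMinAbs * (φ j z - φ j y).valMinAbs
      - ((ψ z - ∑ j, a j * φ j z).valMinAbs - (ψ y - ∑ j, a j * φ j y).valMinAbs)) / p) =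
    (ψ z - ψ y).valMinAbs - ∑ j, (a j).valMinAbs * (φ j z - φ j y).valMinAbs
      - ((ψ z - ∑ j, a j * φ j z).valMinAbs - (ψ y - ∑ j, a j * φ j y).valMinAbs) := by
  apply Int.mul_ediv_cancel'
  rw [← ZMod.intCast_zmod_eq_zero_iff_dvd]
  push_cast
  simp only [mul_sub, Finset.sum_sub_distrib]
  ring

lemma sum_carry (hp2 : p ≠ 2) (x : ZMod p) : ∑ g : ZMod p, carry x (x + g) (x + g + 1) = 1 := by
  have hp : (p : ℤ) ≠ 0 := by exact_mod_cast (Fact.out : p.Prime).ne_zero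
  apply mul_left_cancel₀ hp
  rw [Finset.mul_sum]
  simp only [carry_spec]
  have h1 : ∀ g : ZMod p, x + g + 1 - (x + g) = 1 := fun g => by ring
  have h2 : ∀ g : ZMod p, x + g + 1 - x = g + 1 := fun g => by ring
  have h3 := Equiv.sum_comp (Equiv.addRight (1 : ZMod p)) (fun g => g.valMinAbs)
  simp only [Equiv.coe_addRight] at h3
  simp only [h1, h2, add_sub_cancel_left, Finset.sum_sub_distrib, Finset.sum_add_distrib,
    valMinAbs_one hp2, h3]
  simp

/-- The weights of the cycle dual to the powers of the Bockstein class. -/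
def ωodd (q : ℕ) (g : ZMod p) : ZMod p :=
  if Even q then 1 else (if g = 1 then 1 else 0) - (if g = 0 then 1 else 0)

/-- The Bockstein data for odd `p`. -/
def bockOdd (hp2 : p ≠ 2) : Bock p where
  D' := 1
  β := three fun a b c => (carry a b c : ZMod p)
  ω := ωodd
  deg := by simp [hp2]
  W1 q := by
    by_cases h : Even q <;> simp [ωodd, h]
  W2 q h := by
    by_cases hq : Even q
    · have : ¬ Even (q + 1) := by simpa [Nat.even_add_one] using hq
      simp only [ωodd, hq, this, if_true, if_false, one_mul]
      have h3 := Equiv.sum_comp (Equiv.subLeft h) (fun g : ZMod p =>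
        (if g = 1 then (1 : ZMod p) else 0) - (if g = 0 then 1 else 0))
      simp only [Equiv.subLeft_apply] at h3
      rw [h3]
      simp
    · have : Even (q + 1) := by simpa [Nat.even_add_one] using hq
      simp only [ωodd, hq, this, if_true, if_false, mul_one]
      simp
  del_β := del_three_eq_zero _ fun a b c d => by
    have hp : (p : ℤ) ≠ 0 := by exact_mod_cast (Fact.out : p.Prime).ne_zero
    have : carry b c d - carry a c d + carry a b d - carry a b c = 0 := by
      apply mul_left_cancel₀ hp
      rw [mul_sub, mul_add, mul_sub]
      simp only [carry_spec]
      ring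
    exact_mod_cast congrArg (Int.cast : ℤ → ZMod p) this
  β_add s l := by
    rcases l with _ | ⟨a, _ | ⟨b, _ | ⟨c, _ | ⟨d, l⟩⟩⟩⟩ <;> simp [three, carry]
  close g l h := by
    have hp : (p : ℤ) ≠ 0 := by exact_mod_cast (Fact.out : p.Prime).ne_zero
    rcases l with _ | ⟨a, _ | ⟨b, _ | ⟨c, _ | ⟨d, l⟩⟩⟩⟩ <;> simp only [three]
    have : carry a b c = 0 := by
      apply mul_left_cancel₀ hp
      rw [carry_spec]
      have ha := h a (by simp)
      have hb := h b (by simp)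
      have hc := h c (by simp)
      rcases ha with rfl | ⟨-, rfl⟩ <;> rcases hb with rfl | ⟨-, rfl⟩ <;>
        rcases hc with rfl | ⟨-, rfl⟩ <;> simp [valMinAbs_one hp2, valMinAbs_neg_one hp2]
    rw [this]
    simp
  cmp {X ι} _ ψ φ a := by
    have hp : (p : ℤ) ≠ 0 := by exact_mod_cast (Fact.out : p.Prime).ne_zero
    set T : X → X → ℤ := fun y z => ((ψ z - ψ y).valMinAbs
      - ∑ j, (a j).valMinAbs * (φ j z - φ j y).valMinAbs
      - ((ψ z - ∑ j, a j * φ j z).valMinAbs - (ψ y - ∑ j, a j * φ j y).valMinAbs)) / p with hT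
    have hT' : ∀ y z, (p : ℤ) * T y z = (ψ z - ψ y).valMinAbs
      - ∑ j, (a j).valMinAbs * (φ j z - φ j y).valMinAbs
      - ((ψ z - ∑ j, a j * φ j z).valMinAbs - (ψ y - ∑ j, a j * φ j y).valMinAbs) :=
      exists_carry ψ φ a
    refine ⟨two fun y z => (T y z : ZMod p), fun l => ?_, fun A t l h => ?_⟩
    · rw [del_two]
      rcases l with _ | ⟨y, _ | ⟨z, _ | ⟨w, _ | ⟨d, l⟩⟩⟩⟩ <;> simp only [three, List.map] <;> try simp
      have : carry (ψ y) (ψ z) (ψ w) - ∑ j, (a j).valMinAbs * carry (φ j y) (φ j z) (φ j w) =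
          T z w - T y w + T y z := by
        apply mul_left_cancel₀ hp
        rw [mul_sub, mul_add, mul_sub, hT', hT', hT', Finset.mul_sum]
        simp only [mul_left_comm (p : ℤ), carry_spec, mul_sub, mul_add, Finset.sum_sub_distrib,
          Finset.sum_add_distrib]
        ring
      have := congrArg (Int.cast : ℤ → ZMod p) this
      push_cast at this
      simpa only [ZMod.coe_valMinAbs] using this
    · rcases l with _ | ⟨y, _ | ⟨z, _ | ⟨w, l⟩⟩⟩ <;> simp only [two, List.map]
      obtain ⟨h1, h2⟩ := h y (by simp)
      obtain ⟨h3, h4⟩ := h z (by simp)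
      congr 1
      simp only [hT, h1, h2, h3, h4, mul_add, Finset.sum_add_distrib, add_sub_add_right_eq_sub]
  block {ι} _ _ M n x j c v hx hv := by
    have hc : ∀ k g k' g', Z M ωodd n (step (step x k g) k' g') (fun l => cup 2
        (fun l => three (fun a b c => (carry a b c : ZMod p)) (l.map fun y => y.2 j)) c
          (x :: step x k g :: l)) =
        (carry (x.2 j) ((step x k g).2 j) ((step (step x k g) k' g').2 j) : ZMod p) *
          Z M ωodd n (step (step x k g) k' g') c := by
      intro k g k' g'
      rw [← Z_mul]
      apply Z_congr_head
      intro l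
      rw [cup_succ_cons, cup_succ_cons, cup_zero_cons]
      rfl
    have hs : (sgn M x.1 j : ZMod p) * sgn M x.1 j = 1 := by
      rw [sgn, ← mul_pow]; simp
    have he : Even (x.1 j) := (even_iff_two_dvd).2 hx
    have ho : ¬ Even (x.1 j + 1) := by simpa [Nat.even_add_one] using he
    rw [show n + (1 + 1) = (n + 1) + 1 by ring, Z, Finset.sum_eq_single j]
    · split_ifs with h2 h3 h3
      · have : ∀ g, Z M ωodd (n + 1) (step x j g) (fun l => cup 2
          (fun l => three (fun a b c => (carry a b c : ZMod p)) (l.map fun y => y.2 j)) c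
            (x :: l)) = sgn M x.1 j *
              ((carry (x.2 j) (x.2 j + g) (x.2 j + g + 1) : ZMod p) * v) := by
          intro g
          rw [Z, Finset.sum_eq_single j]
          · have h4 : (step x j g).1 j < M j := by simp [step]; omega
            have h5 : (step x j g).1 j = x.1 j + 1 := by simp [step]
            rw [if_pos h4, show (step x j g).1 = Function.update x.1 j (x.1 j + 1) from rfl,
              sgn_update _ _ _ h2]
            simp only [lt_self_iff_false, if_false, Function.update_self]
            congr 1
            simp only [hc]
            have h6 : ∀ g', Z M ωodd n (step (step x j g) j g') c = v := fun g' =>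
              hv h3 _ (by simp [step])
            simp only [h6]
            simp only [ωodd, ho, if_false, sub_mul, Finset.sum_sub_distrib]
            simp [step, (carry_eq_zero _ _).2]
          · intro k _ hk
            simp only [hc]
            have : ∀ g', (step (step x j g) k g').2 j = (step x j g).2 j := by
              intro g'
              simp [step, Function.update_of_ne hk.symm]
            simp [this, (carry_eq_zero _ _).2]
          · simp
        simp only [this]
        simp only [ωodd, he, if_true, one_mul]
        rw [← Finset.mul_sum, ← mul_assoc, hs, one_mul, ← Finset.sum_mul]
        have := congrArg (Int.cast : ℤ → ZMod p) (sum_carry hp2 (x.2 j))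
        push_cast at this
        rw [this, one_mul]
      · have : ∀ g, Z M ωodd (n + 1) (step x j g) (fun l => cup 2
          (fun l => three (fun a b c => (carry a b c : ZMod p)) (l.map fun y => y.2 j)) c
            (x :: l)) = 0 := by
          intro g
          rw [Z]
          refine Finset.sum_eq_zero fun k _ => ?_
          rcases eq_or_ne k j with rfl | hk
          · rw [if_neg]
            simp [step]; omega
          · simp only [hc]
            have : ∀ g', (step (step x j g) k g').2 j = (step x j g).2 j := by
              intro g'
              simp [step, Function.update_of_ne hk.symm]
            simp [this, (carry_eq_zero _ _).2]
        simp [this]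
      · omega
      · rfl
    · intro k _ hk
      have : ∀ g, Z M ωodd (n + 1) (step x k g) (fun l => cup 2
          (fun l => three (fun a b c => (carry a b c : ZMod p)) (l.map fun y => y.2 j)) c
            (x :: l)) = 0 := by
        intro g
        rw [Z]
        have h7 : (step x k g).2 j = x.2 j := by simp [step, Function.update_of_ne hk.symm]
        simp [hc, h7, (carry_eq_zero _ _).1]
      simp [this]
    · simp

end Odd

/-- Bockstein data exist for every prime. -/
def bock (p : ℕ) [Fact p.Prime] : Bock p :=
  if h : p = 2 then by
    subst h
    exact bock2
  else bockOdd h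

/-! ### Evaluation of products of linear combinations of Bockstein classes -/

section Eval

variable {p : ℕ} [NeZero p] {ι κ : Type} [Fintype ι] [LinearOrder ι]

/-- The sum over all ways to choose a direction for every member of the list such that each
direction `j` is chosen at most `cap j` times, of the product of the coefficients. -/
def NN (α : κ → ι → ZMod p) : (ι → ℕ) → List κ → ZMod p
  | _, [] => 1
  | cap, k :: ks => ∑ j, if 0 < cap j then α k j * NN α (Function.update cap j (cap j - 1)) ks else 0

lemma Z_prodC (B : Bock p) (α : κ → ι → ZMod p) (M : ι → ℕ) (ks : List κ) (cap : ι → ℕ)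
    (x : Vert p ι) (hx : ∀ j, (B.D' + 1) ∣ x.1 j) (hM : ∀ j, M j = x.1 j + (B.D' + 1) * cap j) :
    Z M B.ω ((B.D' + 1) * ks.length) x
      (prodC (B.D' + 1) (fun k l => ∑ j, α k j * B.β (l.map fun y => y.2 j)) ks) = NN α cap ks := by
  induction ks generalizing cap x with
  | nil => rfl
  | cons k ks ih =>
    have h1 : prodC (B.D' + 1) (fun k l => ∑ j, α k j * B.β (l.map fun y => y.2 j)) (k :: ks) =
        fun l => ∑ j, α k j * cup (B.D' + 1) (fun l : List (Vert p ι) => B.β (l.map fun y => y.2 j))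
          (prodC (B.D' + 1) (fun k l => ∑ j, α k j * B.β (l.map fun y => y.2 j)) ks) l := by
      funext l
      rw [prodC, cup_sum_left]
    rw [h1, Z_sum, NN]
    refine Finset.sum_congr rfl fun j _ => ?_
    rw [Z_mul, List.length_cons, mul_add, mul_one]
    rw [B.block M _ x j _ (NN α (Function.update cap j (cap j - 1)) ks) (hx j)]
    · by_cases hj : 0 < cap j
      · have := Nat.mul_le_mul_left (B.D' + 1) hj
        rw [if_pos hj, if_pos]
        rw [hM j]
        omega
      · rw [if_neg hj, if_neg, mul_zero]
        rw [hM j, Nat.eq_zero_of_not_pos hj]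
        omega
    · intro hle y hy
      have hj : 0 < cap j := by
        by_contra hj
        rw [hM j, Nat.eq_zero_of_not_pos hj] at hle
        omega
      apply ih
      · intro i
        rw [hy]
        rcases eq_or_ne i j with rfl | h
        · simpa using hx i
        · simpa [h] using hx i
      · intro i
        rw [hy]
        rcases eq_or_ne i j with rfl | h
        · obtain ⟨c, hc⟩ := Nat.exists_eq_add_of_lt hj
          simp only [Function.update_self]
          rw [hM, hc]
          simp
          ring
        · simpa [h] using hM i

lemma sum_update (rk cap : ι → ℕ) (j : ι) (hj : 0 < cap j) :
    ∑ i, rk i * Function.update cap j (cap j - 1) i + rk j = ∑ i, rk i * cap i := by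
  have : ∑ i, rk i * cap i = ∑ i, (rk i * Function.update cap j (cap j - 1) i
      + if i = j then rk i else 0) := by
    refine Finset.sum_congr rfl fun i _ => ?_
    rcases eq_or_ne i j with rfl | h
    · obtain ⟨c, hc⟩ := Nat.exists_eq_add_of_lt hj
      simp [hc]; ring
    · simp [h]
  rw [this, Finset.sum_add_distrib]
  simp

lemma NN_eq_zero (α : κ → ι → ZMod p) (ld : κ → ι) (rk : ι → ℕ)
    (hα : ∀ k j, α k j ≠ 0 → j = ld k ∨ rk (ld k) < rk j) (ks : List κ) (cap : ι → ℕ)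
    (h : ∑ j, rk j * cap j < (ks.map fun k => rk (ld k)).sum) : NN α cap ks = 0 := by
  induction ks generalizing cap with
  | nil => simp at h
  | cons k ks ih =>
    rw [NN]
    refine Finset.sum_eq_zero fun j _ => ?_
    split_ifs with hj
    · by_cases h0 : α k j = 0
      · simp [h0]
      · rw [ih, mul_zero]
        have h1 := sum_update rk cap j hj
        simp only [List.map_cons, List.sum_cons] at h
        have : rk (ld k) ≤ rk j := by
          rcases hα k j h0 with rfl | h
          · rfl
          · exact h.le
        omega
    · rfl

/-- When the coefficients are triangular for the leading terms `ld` with respect to `rk`, only the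
choice of the leading term in every factor contributes to the coefficient of the product of the
leading terms. -/
lemma NN_eq_prod (α : κ → ι → ZMod p) (ld : κ → ι) (rk : ι → ℕ)
    (hα : ∀ k j, α k j ≠ 0 → j = ld k ∨ rk (ld k) < rk j) (ks : List κ) (cap : ι → ℕ)
    (h : ∀ j, cap j = (ks.map ld).count j) : NN α cap ks = (ks.map fun k => α k (ld k)).prod := by
  induction ks generalizing cap with
  | nil => rfl
  | cons k ks ih =>
    have hpos : 0 < cap (ld k) := by rw [h]; simp
    have hup : ∀ j, Function.update cap (ld k) (cap (ld k) - 1) j = (ks.map ld).count j := by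
      intro j
      rcases eq_or_ne j (ld k) with rfl | hj
      · simp [h]
      · simp [hj, h, hj.symm]
    rw [NN, Finset.sum_eq_single (ld k)]
    · rw [if_pos hpos, ih _ hup]
      simp
    · intro j _ hj
      split_ifs with hc
      · by_cases h0 : α k j = 0
        · simp [h0]
        · rw [NN_eq_zero α ld rk hα, mul_zero]
          have h1 := sum_update rk cap j hc
          have h2 := sum_update rk cap (ld k) hpos
          have h3 : ∀ ks : List κ, ∑ j, rk j * (ks.map ld).count j =
              (ks.map fun k => rk (ld k)).sum := by
            intro ks
            induction ks with
            | nil => simp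
            | cons k ks ih =>
              simp only [List.map_cons, List.count_cons, List.sum_cons, ← ih, mul_add,
                Finset.sum_add_distrib]
              simp [add_comm]
          simp only [hup, h3] at h2
          have := (hα k j h0).resolve_left hj
          omega
      · rfl
    · simp

end Eval

/-! ### Sectors of the punctured plane -/

section Sector

variable {p : ℕ} [Fact p.Prime]

/-- The index of the sector, among `p` congruent ones around the origin, that contains `z`. -/
def sector (p : ℕ) (z : ℂ) : ZMod p := ((⌊p * z.arg / (2 * Real.pi)⌋ : ℤ) : ZMod p)

lemma sector_polar (r θ : ℝ) (hr : 0 < r) :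
    sector p (r * Complex.exp (θ * Complex.I)) = ((⌊p * θ / (2 * Real.pi)⌋ : ℤ) : ZMod p) := by
  set z := (r : ℂ) * Complex.exp (θ * Complex.I) with hz
  have hnorm : ‖z‖ = r := by
    rw [hz, norm_mul, Complex.norm_exp_ofReal_mul_I, mul_one, Complex.norm_real, Real.norm_eq_abs,
      abs_of_pos hr]
  have h1 := Complex.norm_mul_exp_arg_mul_I z
  rw [hnorm] at h1
  have hr' : (r : ℂ) ≠ 0 := by exact_mod_cast hr.ne'
  have h2 := mul_left_cancel₀ hr' (h1.trans hz)
  obtain ⟨n, hn⟩ := Complex.exp_eq_exp_iff_exists_int.1 h2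
  have h3 : z.arg = θ + n * (2 * Real.pi) := by
    have : ((z.arg : ℝ) : ℂ) = ((θ + n * (2 * Real.pi) : ℝ) : ℂ) := by
      apply mul_right_cancel₀ Complex.I_ne_zero
      rw [hn]; push_cast; ring
    exact_mod_cast this
  have h4 : p * z.arg / (2 * Real.pi) = p * θ / (2 * Real.pi) + ((p * n : ℤ) : ℝ) := by
    rw [h3]
    have := Real.pi_pos
    push_cast
    field_simp
  rw [sector, h4, Int.floor_add_intCast]
  simp

lemma sector_mul (g : ZMod p) (z : ℂ) (hz : z ≠ 0) :
    sector p (ZMod.stdAddChar g * z) = sector p z + g := by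
  have hp : (p : ℝ) ≠ 0 := by exact_mod_cast (Fact.out : p.Prime).ne_zero
  obtain ⟨n, rfl⟩ := ZMod.intCast_surjective g
  have h1 := Complex.norm_mul_exp_arg_mul_I z
  have h2 : ZMod.stdAddChar (n : ZMod p) * z =
      (‖z‖ : ℝ) * Complex.exp ((z.arg + 2 * Real.pi * n / p : ℝ) * Complex.I) := by
    conv_lhs => rw [← h1]
    rw [ZMod.stdAddChar_coe, mul_left_comm, ← Complex.exp_add]
    congr 2
    push_cast
    ring
  rw [h2, sector_polar _ _ (norm_pos_iff.2 hz)]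
  have : p * (z.arg + 2 * Real.pi * n / p) / (2 * Real.pi) = p * z.arg / (2 * Real.pi) + (n : ℝ) := by
    have := Real.pi_pos
    field_simp
  rw [this, Int.floor_add_intCast, sector]
  push_cast
  rfl

lemma sector_close (p : ℕ) [Fact p.Prime] : ∃ ε : ℝ, 0 < ε ∧ ∀ (c : ℝ) (l : List ℂ), 0 < c →
    (p = 2 → ∀ z ∈ l, z.im = 0) → (∀ z ∈ l, c ≤ ‖z‖) →
    (∀ z ∈ l, ∀ w ∈ l, ‖w - z‖ < ε * c) →
    ∃ g, ∀ z ∈ l, sector p z = g ∨ (p ≠ 2 ∧ sector p z = g + 1) := by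
  have hp : (0 : ℝ) < p := by exact_mod_cast (Fact.out : p.Prime).pos
  have hpi := Real.pi_pos
  have h0 : ContinuousAt Complex.arg 1 := Complex.continuousAt_arg Complex.one_mem_slitPlane
  obtain ⟨ε, hε, h⟩ := Metric.continuousAt_iff.1 h0 (Real.pi / p) (by positivity)
  refine ⟨min ε 1, lt_min hε one_pos, fun c l hc hre hl hd => ?_⟩
  rcases l with _ | ⟨z₀, l⟩
  · exact ⟨0, by simp⟩
  have hz₀ := hl z₀ (by simp)
  have hz₀' : z₀ ≠ 0 := norm_pos_iff.1 (hc.trans_le hz₀)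
  by_cases hp2 : p = 2
  · refine ⟨sector p z₀, fun z hz => Or.inl ?_⟩
    have hr0 := hre hp2 z₀ (by simp)
    have hr := hre hp2 z hz
    have hzn := hl z hz
    have hlt : ‖z - z₀‖ < c := by
      refine (hd z₀ (by simp) z hz).trans_le ?_
      nlinarith [min_le_right ε 1]
    have e0 : z₀ = (z₀.re : ℂ) := Complex.ext (by simp) (by simp [hr0])
    have e1 : z = (z.re : ℂ) := Complex.ext (by simp) (by simp [hr])
    rw [e0] at hz₀
    rw [e1] at hzn
    rw [e0, e1, ← Complex.ofReal_sub] at hlt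
    simp only [Complex.norm_real, Real.norm_eq_abs] at hz₀ hzn hlt
    rw [e0, e1, sector, sector]
    rcases le_total 0 z₀.re with h1 | h1
    · have h2 : 0 ≤ z.re := by
        rw [abs_lt] at hlt; rw [abs_of_nonneg h1] at hz₀; linarith
      rw [Complex.arg_ofReal_of_nonneg h1, Complex.arg_ofReal_of_nonneg h2]
    · have h1' : z₀.re < 0 := by
        rcases h1.lt_or_eq with h | h
        · exact h
        · rw [h] at hz₀; simp at hz₀; linarith
      have h2 : z.re < 0 := by
        rw [abs_lt] at hlt; rw [abs_of_neg h1'] at hz₀; linarith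
      rw [Complex.arg_ofReal_of_neg h1', Complex.arg_ofReal_of_neg h2]
  · set u : ℝ := p * z₀.arg / (2 * Real.pi) with hu
    refine ⟨((⌊u - 1 / 2⌋ : ℤ) : ZMod p), fun z hz => ?_⟩
    have hzn := hl z hz
    have hz' : z ≠ 0 := norm_pos_iff.1 (hc.trans_le hzn)
    have h1 : ‖z / z₀ - 1‖ < ε := by
      rw [div_sub_one hz₀', norm_div, div_lt_iff₀ (norm_pos_iff.2 hz₀')]
      refine (hd z₀ (by simp) z hz).trans_le ?_
      have := min_le_left ε 1
      have h3 : 0 < min ε 1 := lt_min hε one_pos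
      calc min ε 1 * c ≤ ε * c := by gcongr
        _ ≤ ε * ‖z₀‖ := by gcongr
    have h2 := h (by rwa [dist_eq_norm])
    rw [Complex.arg_one, Real.dist_eq, sub_zero, abs_lt] at h2
    set η := (z / z₀).arg with hη
    have h3 : z = (‖z‖ : ℝ) * Complex.exp ((z₀.arg + η : ℝ) * Complex.I) := by
      have e1 := Complex.norm_mul_exp_arg_mul_I z₀
      have e2 := Complex.norm_mul_exp_arg_mul_I (z / z₀)
      have e3 : z = z₀ * (z / z₀) := by field_simp
      calc z = z₀ * (z / z₀) := e3
        _ = (‖z₀‖ * Complex.exp (z₀.arg * Complex.I)) *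
            (‖z / z₀‖ * Complex.exp ((z / z₀).arg * Complex.I)) := by rw [e1, e2]
        _ = ((‖z₀‖ * ‖z / z₀‖ : ℝ) : ℂ) * Complex.exp ((z₀.arg + η : ℝ) * Complex.I) := by
          push_cast
          rw [add_mul, Complex.exp_add]
          ring
        _ = _ := by
          rw [← norm_mul, ← e3]
    rw [h3, sector_polar _ _ (norm_pos_iff.2 hz')]
    have h4 : p * (z₀.arg + η) / (2 * Real.pi) = u + p * η / (2 * Real.pi) := by
      rw [hu]; ring
    have h5 : p * η / (2 * Real.pi) < 1 / 2 := by
      rw [div_lt_iff₀ (by positivity)]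
      have := (lt_div_iff₀ hp).1 h2.2
      linarith
    have h6 : -(1 / 2) < p * η / (2 * Real.pi) := by
      rw [lt_div_iff₀ (by positivity)]
      have h7 := h2.1
      rw [← neg_div, div_lt_iff₀ hp] at h7
      linarith
    rw [h4]
    have l1 : ⌊u - 1 / 2⌋ ≤ ⌊u + p * η / (2 * Real.pi)⌋ := Int.floor_le_floor (by linarith)
    have l2 : ⌊u + p * η / (2 * Real.pi)⌋ ≤ ⌊u - 1 / 2⌋ + 1 := by
      rw [← Int.floor_add_one]
      exact Int.floor_le_floor (by linarith)
    rcases (show ⌊u + p * η / (2 * Real.pi)⌋ = ⌊u - 1 / 2⌋ ∨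
      ⌊u + p * η / (2 * Real.pi)⌋ = ⌊u - 1 / 2⌋ + 1 by omega) with h | h
    · left; rw [h]
    · right; rw [h]; exact ⟨hp2, by push_cast; rfl⟩

end Sector

/-! ### The geometric complex and its free action -/

section Complex

variable {p B : ℕ} {ι : Type}

/-- Vertices of the complex, with positions bounded by `B`. -/
abbrev Grid (p B : ℕ) (ι : Type) := (ι → Fin (B + 1)) × (ι → ZMod p)

/-- Two vertices span an edge of the staircase triangulation when their positions are comparable and
their group elements agree wherever the positions do. -/
def Compat (a b : Grid p B ι) : Prop :=
  ((∀ j, a.1 j ≤ b.1 j) ∨ ∀ j, b.1 j ≤ a.1 j) ∧ ∀ j, a.1 j = b.1 j → a.2 j = b.2 j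

/-- The realization of the complex: weights on the vertices whose support is a simplex with all
positions bounded by `M`. -/
def IsPt [Fintype ι] [DecidableEq ι] [NeZero p] (M : ι → ℕ) (w : Grid p B ι → ℝ) : Prop :=
  (∀ q, 0 ≤ w q) ∧ ∑ q, w q = 1 ∧ (∀ a b, w a ≠ 0 → w b ≠ 0 → Compat a b) ∧
    ∀ a, w a ≠ 0 → ∀ j, (a.1 j : ℕ) ≤ M j

/-- The weights supported on `A`. -/
def cell [Fintype ι] [DecidableEq ι] [NeZero p] (A : Set (Grid p B ι)) : Set (Grid p B ι → ℝ) :=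
  {w | (∀ q, 0 ≤ w q) ∧ ∑ q, w q = 1 ∧ ∀ q, q ∉ A → w q = 0}

/-- The vertex sets that span simplices. -/
def IsSimp (M : ι → ℕ) (A : Set (Grid p B ι)) : Prop :=
  (∀ a ∈ A, ∀ b ∈ A, Compat a b) ∧ ∀ a ∈ A, ∀ j, (a.1 j : ℕ) ≤ M j

/-- The collection of all simplices. -/
def cells [Fintype ι] [DecidableEq ι] [NeZero p] (M : ι → ℕ) :
    Set (Set (Grid p B ι → ℝ)) := {C | ∃ A, IsSimp M A ∧ C = cell A}

/-- Translation of the group elements. -/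
def act (s : ι → ZMod p) : (Grid p B ι → ℝ) →ₗ[ℝ] (Grid p B ι → ℝ) :=
  LinearMap.funLeft ℝ ℝ fun q => (q.1, q.2 - s)

lemma act_apply (s : ι → ZMod p) (w : Grid p B ι → ℝ) (q : Grid p B ι) :
    act s w q = w (q.1, q.2 - s) := rfl

/-- The grid vertex named by a vertex with unbounded position. -/
def gr (x : Vert p ι) : Grid p B ι := (fun j => Fin.ofNat (B + 1) (x.1 j), x.2)

/-- The point mass at a vertex. -/
def vtx (x : Vert p ι) : Grid p B ι → ℝ := by
  classical exact Pi.single (gr x) 1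

lemma vtx_apply (x : Vert p ι) (q : Grid p B ι) [Decidable (q = gr x)] :
    (vtx x : Grid p B ι → ℝ) q = if q = gr x then 1 else 0 := by
  classical
  rw [vtx, Pi.single_apply]
  congr

lemma act_vtx (s : ι → ZMod p) (x : Vert p ι) :
    act s (vtx x : Grid p B ι → ℝ) = vtx (tr s x) := by
  classical
  funext q
  rw [act_apply, vtx_apply, vtx_apply]
  congr 1
  rw [eq_iff_iff, Prod.ext_iff, Prod.ext_iff]
  exact and_congr Iff.rfl sub_eq_iff_eq_add

variable [Fintype ι] [LinearOrder ι] [NeZero p] {M : ι → ℕ}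

lemma mem_cell_isPt {A : Set (Grid p B ι)} (hA : IsSimp M A) {w : Grid p B ι → ℝ} (hw : w ∈ cell A) :
    IsPt M w := by
  have h : ∀ q, w q ≠ 0 → q ∈ A := fun q hq => by
    by_contra h
    exact hq (hw.2.2 q h)
  exact ⟨hw.1, hw.2.1, fun a b ha hb => hA.1 a (h a ha) b (h b hb), fun a ha => hA.2 a (h a ha)⟩

lemma IsPt.mem_cell {w : Grid p B ι → ℝ} (hw : IsPt M w) :
    ∃ A : Set (Grid p B ι), IsSimp M A ∧ w ∈ cell A :=
  ⟨{q | w q ≠ 0}, ⟨fun a ha b hb => hw.2.2.1 a b ha hb, fun a ha => hw.2.2.2 a ha⟩,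
    hw.1, hw.2.1, fun q hq => by simpa using hq⟩

lemma isCompact_cell (A : Set (Grid p B ι)) : IsCompact (cell A) := by
  classical
  have : cell A = stdSimplex ℝ (Grid p B ι) ∩ {w | ∀ q, q ∉ A → w q = 0} := by
    ext w; simp [cell, stdSimplex, and_assoc]
  rw [this]
  apply (isCompact_stdSimplex _ _).inter_right
  simp only [Set.ofPred_forall]
  exact isClosed_iInter fun q => isClosed_iInter fun _ =>
    isClosed_eq (continuous_apply q) continuous_const

lemma convex_cell (A : Set (Grid p B ι)) : Convex ℝ (cell A) := by
  classical
  have : cell A = stdSimplex ℝ (Grid p B ι) ∩ {w | ∀ q, q ∉ A → w q = 0} := by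
    ext w; simp [cell, stdSimplex, and_assoc]
  rw [this]
  apply (convex_stdSimplex _ _).inter
  intro w hw w' hw' a b _ _ _ q hq
  simp [hw q hq, hw' q hq]

lemma isCompact_isPt : IsCompact {w : Grid p B ι → ℝ | IsPt M w} := by
  classical
  have : {w : Grid p B ι → ℝ | IsPt M w} = ⋃ A ∈ {A : Set (Grid p B ι) | IsSimp M A}, cell A := by
    ext w
    simp only [Set.mem_ofPred_eq, Set.mem_iUnion, exists_prop]
    exact ⟨fun h => h.mem_cell, fun ⟨A, hA, hw⟩ => mem_cell_isPt hA hw⟩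
  rw [this]
  exact (Set.toFinite _).isCompact_biUnion fun A _ => isCompact_cell A

lemma IsPt.act {w : Grid p B ι → ℝ} (hw : IsPt M w) (s : ι → ZMod p) : IsPt M (act s w) := by
  refine ⟨fun q => hw.1 _, ?_, fun a b ha hb => ?_, fun a ha => hw.2.2.2 (a.1, a.2 - s) ha⟩
  · rw [← hw.2.1]
    simp only [act_apply]
    exact Equiv.sum_comp ((Equiv.refl _).prodCongr (Equiv.subRight s)) w
  · obtain ⟨h1, h2⟩ := hw.2.2.1 _ _ ha hb
    exact ⟨h1, fun j hj => sub_left_injective (h2 j hj)⟩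

/-- A vertex of the support of lowest position. -/
def IsLow (w : Grid p B ι → ℝ) (q : Grid p B ι) : Prop :=
  w q ≠ 0 ∧ ∀ q', w q' ≠ 0 → ∀ j, q.1 j ≤ q'.1 j

/-- The group elements of the lowest vertex of the support. -/
def low (w : Grid p B ι → ℝ) : ι → ZMod p := by
  classical exact if h : ∃ q, IsLow w q then h.choose.2 else 0

lemma low_eq {w : Grid p B ι → ℝ} (hw : ∀ a b, w a ≠ 0 → w b ≠ 0 → Compat a b) {q : Grid p B ι}
    (hq : IsLow w q) : low w = q.2 := by
  have h : ∃ q, IsLow w q := ⟨q, hq⟩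
  rw [low, dif_pos h]
  have h' := h.choose_spec
  funext j
  exact (hw _ _ h'.1 hq.1).2 j (le_antisymm (h'.2 _ hq.1 j) (hq.2 _ h'.1 j))

lemma IsPt.exists_isLow {w : Grid p B ι → ℝ} (hw : IsPt M w) : ∃ q, IsLow w q := by
  classical
  have hne : (Finset.univ.filter fun q => w q ≠ 0).Nonempty := by
    by_contra h
    rw [Finset.not_nonempty_iff_eq_empty, Finset.filter_eq_empty_iff] at h
    have : ∑ q, w q = 0 := Finset.sum_eq_zero fun q hq => by simpa using h hq
    rw [hw.2.1] at this
    exact one_ne_zero this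
  obtain ⟨q, hq, hmin⟩ := Finset.exists_min_image _ (fun q : Grid p B ι => ∑ j, (q.1 j : ℕ)) hne
  simp only [Finset.mem_filter, Finset.mem_univ, true_and] at hq hmin
  refine ⟨q, hq, fun q' hq' => ?_⟩
  rcases (hw.2.2.1 q q' hq hq').1 with h | h
  · exact h
  · have h1 : ∑ j, (q'.1 j : ℕ) = ∑ j, (q.1 j : ℕ) :=
      le_antisymm (Finset.sum_le_sum fun j _ => h j) (hmin q' hq')
    have h2 := (Finset.sum_eq_sum_iff_of_le fun j _ => (show (q'.1 j : ℕ) ≤ q.1 j from h j)).1 h1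
    intro j
    have := h2 j (Finset.mem_univ j)
    exact le_of_eq (Fin.ext this.symm)

lemma IsPt.low_act {w : Grid p B ι → ℝ} (hw : IsPt M w) (s : ι → ZMod p) :
    low (VKF.act s w) = low w + s := by
  obtain ⟨q, hq⟩ := hw.exists_isLow
  rw [low_eq hw.2.2.1 hq, low_eq (hw.act s).2.2.1 (q := (q.1, q.2 + s))]
  refine ⟨by simpa [act_apply] using hq.1, fun q' hq' j => hq.2 _ hq' j⟩

lemma low_vtx (x : Vert p ι) : low (vtx x : Grid p B ι → ℝ) = x.2 := by
  classical
  have h : ∀ a, (vtx x : Grid p B ι → ℝ) a ≠ 0 → a = gr x := by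
    intro a ha
    rw [vtx_apply] at ha
    by_contra h
    simp [h] at ha
  rw [low_eq (q := gr x)]
  · rfl
  · intro a b ha hb
    rw [h a ha, h b hb]
    exact ⟨Or.inl fun j => le_rfl, fun j _ => rfl⟩
  · refine ⟨by simp [vtx_apply], fun q' hq' j => by rw [h q' hq']⟩

/-- The vertices of a staircase path from the origin span a simplex. -/
lemma path_cell (hB : ∀ j, M j ≤ B) (l : List (Vert p ι))
    (hl : List.IsChain (Step M) ((0, 0) :: l)) :
    ∃ C ∈ (cells M : Set (Set (Grid p B ι → ℝ))), ∀ y ∈ ((0, 0) :: l : List (Vert p ι)), vtx y ∈ C := by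
  classical
  let R : Vert p ι → Vert p ι → Prop := fun x y =>
    ((∀ j, x.1 j ≤ M j) → ∀ j, y.1 j ≤ M j) ∧ (∀ j, x.1 j ≤ y.1 j) ∧ ∀ j, x.1 j = y.1 j → x.2 j = y.2 j
  have : Trans R R R := ⟨fun {a b c} h1 h2 => ⟨fun h => h2.1 (h1.1 h),
    fun j => (h1.2.1 j).trans (h2.2.1 j), fun j hj => by
      have e1 := h1.2.1 j
      have e2 := h2.2.1 j
      exact (h1.2.2 j (by omega)).trans (h2.2.2 j (by omega))⟩⟩
  have hR : List.IsChain R ((0, 0) :: l) := by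
    refine hl.imp ?_
    rintro x y ⟨j, g, hj, rfl⟩
    refine ⟨fun h k => ?_, fun k => ?_, fun k hk => ?_⟩ <;> rcases eq_or_ne k j with rfl | hkj
    · simp [step]; omega
    · simpa [step, hkj] using h k
    · simp [step]
    · simp [step, hkj]
    · simp [step] at hk
    · simp [step, hkj]
  have hP := hR.pairwise
  have hM : ∀ y ∈ ((0, 0) :: l : List (Vert p ι)), ∀ j, y.1 j ≤ M j := by
    intro y hy
    rcases List.mem_cons.1 hy with rfl | hy
    · simp
    · exact ((List.pairwise_cons.1 hP).1 y hy).1 (by simp)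
  have hC : ∀ x ∈ ((0, 0) :: l : List (Vert p ι)), ∀ y ∈ ((0, 0) :: l : List (Vert p ι)),
      Compat (gr x : Grid p B ι) (gr y) := by
    have hval : ∀ x ∈ ((0, 0) :: l : List (Vert p ι)), ∀ j,
        (((gr x : Grid p B ι).1 j : Fin (B + 1)) : ℕ) = x.1 j := by
      intro x hx j
      have := hM x hx j
      have := hB j
      simp only [gr, Fin.ofNat]
      exact Nat.mod_eq_of_lt (by omega)
    have hRC : ∀ x ∈ ((0, 0) :: l : List (Vert p ι)), ∀ y ∈ ((0, 0) :: l : List (Vert p ι)),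
        R x y → Compat (gr x : Grid p B ι) (gr y) := by
      intro x hx y hy h
      refine ⟨Or.inl fun j => ?_, fun j hj => h.2.2 j ?_⟩
      · rw [Fin.le_def, hval x hx, hval y hy]; exact h.2.1 j
      · rw [← hval x hx, ← hval y hy, hj]
    have hsymm : ∀ a b : Grid p B ι, Compat a b → Compat b a :=
      fun a b h => ⟨h.1.symm, fun j hj => (h.2 j hj.symm).symm⟩
    intro x hx y hy
    by_cases hxy : x = y
    · rw [hxy]; exact ⟨Or.inl fun j => le_rfl, fun j _ => rfl⟩
    · have : Std.Symm fun a b => R a b ∨ R b a := ⟨fun _ _ h => h.symm⟩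
      rcases (hP.imp (S := fun a b => R a b ∨ R b a) Or.inl).forall hx hy hxy with h | h
      · exact hRC x hx y hy h
      · exact hsymm _ _ (hRC y hy x hx h)
  refine ⟨_, ⟨{q | ∃ y ∈ ((0, 0) :: l : List (Vert p ι)), q = gr y}, ⟨?_, ?_⟩, rfl⟩, fun y hy => ?_⟩
  · rintro a ⟨x, hx, rfl⟩ b ⟨y, hy, rfl⟩
    exact hC x hx y hy
  · rintro a ⟨x, hx, rfl⟩ j
    exact (Nat.mod_le _ _).trans (hM x hx j)
  · refine ⟨fun q => ?_, ?_, fun q hq => ?_⟩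
    · rw [vtx_apply]; split_ifs <;> norm_num
    · simp [vtx_apply]
    · rw [vtx_apply, if_neg]
      rintro rfl
      exact hq ⟨y, hy, rfl⟩

end Complex

/-! ### Common zeros of equivariant functions -/

section Core

variable {p B : ℕ} [Fact p.Prime] {ι κ : Type} [Fintype ι] [LinearOrder ι] [Fintype κ] {M : ι → ℕ}

/-- Without common zeros, a uniform lower bound and uniform continuity make every short list of
points of the complex lie near a single ray for one of the functions. -/
lemma exists_delta (f : κ → (Grid p B ι → ℝ) → ℂ) (hf : ∀ k, Continuous (f k))
    (hre : p = 2 → ∀ k w, (f k w).im = 0)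
    (h : ∀ w : Grid p B ι → ℝ, IsPt M w → ∃ k, f k w ≠ 0) :
    ∃ δ : ℝ, 0 < δ ∧ ∀ l : List (Grid p B ι → ℝ), l ≠ [] → (∀ y ∈ l, IsPt M y) → Small δ l →
      ∃ k, (∀ y ∈ l, f k y ≠ 0) ∧
        ∃ g, ∀ y ∈ l, sector p (f k y) = g ∨ (p ≠ 2 ∧ sector p (f k y) = g + 1) := by
  classical
  set Y : Set (Grid p B ι → ℝ) := {w | IsPt M w} with hY
  have hYc : IsCompact Y := isCompact_isPt
  rcases Y.eq_empty_or_nonempty with hE | hne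
  · refine ⟨1, one_pos, fun l hl hm => ?_⟩
    obtain ⟨y, l', rfl⟩ := List.exists_cons_of_ne_nil hl
    have : y ∈ Y := hm y (by simp)
    rw [hE] at this
    exact this.elim
  obtain ⟨w₀, hw₀, hmin⟩ := hYc.exists_isMinOn hne (f := fun w => ∑ k, ‖f k w‖)
    (continuous_finsetSum _ fun k _ => (hf k).norm).continuousOn
  obtain ⟨k₀, hk₀⟩ := h w₀ hw₀
  have hκ : 0 < (Fintype.card κ : ℝ) := by
    exact_mod_cast Fintype.card_pos_iff.2 ⟨k₀⟩
  set c : ℝ := (∑ k, ‖f k w₀‖) / Fintype.card κ with hc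
  have hcpos : 0 < c := by
    refine div_pos ?_ hκ
    exact Finset.sum_pos' (fun k _ => norm_nonneg _) ⟨k₀, Finset.mem_univ _, norm_pos_iff.2 hk₀⟩
  have hlow : ∀ w ∈ Y, ∃ k, c ≤ ‖f k w‖ := by
    intro w hw
    by_contra! hcon
    have h1 : ∑ k, ‖f k w‖ < ∑ _k : κ, c :=
      Finset.sum_lt_sum_of_nonempty ⟨k₀, Finset.mem_univ _⟩ fun k _ => hcon k
    rw [Finset.sum_const, Finset.card_univ, nsmul_eq_mul, hc, mul_div_cancel₀ _ hκ.ne'] at h1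
    exact absurd (hmin hw) (not_le.2 h1)
  obtain ⟨ε, hε, hsec⟩ := sector_close p
  have huc : ∀ k, ∃ δ : ℝ, 0 < δ ∧ ∀ x ∈ Y, ∀ y ∈ Y, dist x y < δ →
      dist (f k x) (f k y) < min ε 1 * (c / 2) := by
    intro k
    have := hYc.uniformContinuousOn_of_continuous (hf k).continuousOn
    exact Metric.uniformContinuousOn_iff.1 this _ (by positivity)
  choose δ hδ hδ' using huc
  obtain ⟨k₁, -, hk₁⟩ := Finset.exists_min_image Finset.univ δ ⟨k₀, Finset.mem_univ _⟩
  refine ⟨δ k₁ / 2, by have := hδ k₁; positivity, fun l hl hm hs => ?_⟩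
  obtain ⟨y₀, l', rfl⟩ := List.exists_cons_of_ne_nil hl
  obtain ⟨k, hk⟩ := hlow y₀ (hm y₀ (by simp))
  have hd : ∀ y ∈ y₀ :: l', ∀ z ∈ y₀ :: l', ‖f k z - f k y‖ < min ε 1 * (c / 2) := by
    intro y hy z hz
    rw [← dist_eq_norm]
    refine hδ' k z (hm z hz) y (hm y hy) ((hs z hz y hy).trans_lt ?_)
    have h1 := hk₁ k (Finset.mem_univ _)
    have h2 := hδ k₁
    linarith
  have hge : ∀ y ∈ y₀ :: l', c / 2 ≤ ‖f k y‖ := by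
    intro y hy
    have h1 := hd y hy y₀ (by simp)
    have h2 := norm_sub_norm_le (f k y₀) (f k y)
    have h3 : min ε 1 * (c / 2) ≤ 1 * (c / 2) := by gcongr; exact min_le_right _ _
    linarith
  refine ⟨k, fun y hy => norm_pos_iff.1 ((half_pos hcpos).trans_le (hge y hy)), ?_⟩
  have h1 : p = 2 → ∀ z ∈ (y₀ :: l').map (f k), z.im = 0 := by
    intro hp z hz
    obtain ⟨y, hy, rfl⟩ := List.mem_map.1 hz
    exact hre hp k y
  have h2 : ∀ z ∈ (y₀ :: l').map (f k), c / 2 ≤ ‖z‖ := by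
    intro z hz
    obtain ⟨y, hy, rfl⟩ := List.mem_map.1 hz
    exact hge y hy
  have h3 : ∀ z ∈ (y₀ :: l').map (f k), ∀ w ∈ (y₀ :: l').map (f k), ‖w - z‖ < ε * (c / 2) := by
    intro z hz w hw
    obtain ⟨y, hy, rfl⟩ := List.mem_map.1 hz
    obtain ⟨x, hx, rfl⟩ := List.mem_map.1 hw
    refine (hd y hy x hx).trans_le ?_
    gcongr
    exact min_le_left _ _
  obtain ⟨g, hg⟩ := hsec (c / 2) _ (half_pos hcpos) h1 h2 h3
  exact ⟨g, fun y hy => hg _ (List.mem_map_of_mem hy)⟩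

/-- The existence of common zeros for an ordered set of factors, the order being the one that fixes
the shuffle signs of the fundamental chain. -/
theorem core (α : κ → ι → ZMod p) (ld : κ → ι) (rk : ι → ℕ)
    (hld : ∀ k, α k (ld k) ≠ 0)
    (hα : ∀ k j, α k j ≠ 0 → j = ld k ∨ rk (ld k) < rk j)
    (hM : ∀ j, M j = (if p = 2 then 1 else 2) * (Finset.univ.filter fun k => ld k = j).card)
    (hB : ∀ j, M j ≤ B)
    (f : κ → (Grid p B ι → ℝ) → ℂ) (hf : ∀ k, Continuous (f k))
    (hre : p = 2 → ∀ k w, (f k w).im = 0)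
    (heq : ∀ k s w, f k (act s w) = ZMod.stdAddChar (∑ j, α k j * s j) * f k w) :
    ∃ w : Grid p B ι → ℝ, IsPt M w ∧ ∀ k, f k w = 0 := by
  classical
  by_contra! hcon
  obtain ⟨δ, hδ, hδ'⟩ := exists_delta f hf hre hcon
  set b := bock p with hb
  set ks : List κ := Finset.univ.toList with hks
  have hcap : ∀ j, (Finset.univ.filter fun k => ld k = j).card = (ks.map ld).count j := by
    intro j
    rw [List.count, List.countP_map, List.countP_eq_length_filter, Finset.card_filter,
      ← Finset.sum_map_toList]
    rw [← hks]
    clear_value ks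
    clear hks
    induction ks with
    | nil => rfl
    | cons k ks ih =>
      simp only [List.map_cons, List.sum_cons, ih, List.filter_cons]
      by_cases h : ld k = j <;> simp [h, add_comm]
  have hM' : ∀ j, M j = (b.D' + 1) * (ks.map ld).count j := by
    intro j
    rw [hM, hcap, b.deg]
  have hlen : ks.length = Fintype.card κ := by simp [hks]
  have hsum : ∑ j, M j = (b.D' + 1) * ks.length := by
    simp only [hM, ← b.deg, ← Finset.mul_sum]
    rw [hlen, ← Finset.card_univ]
    rw [Finset.card_eq_sum_card_fiberwise (f := ld) (t := Finset.univ) (by simp)]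
  -- the vertex at the origin shows that there is at least one function
  have hmem : ∀ l, List.IsChain (Step M) ((0, 0) :: l) → ∀ y ∈ ((0, 0) :: l : List (Vert p ι)),
      IsPt M (vtx y : Grid p B ι → ℝ) := by
    intro l hl y hy
    obtain ⟨C, ⟨A, hA, rfl⟩, hC⟩ := path_cell hB l hl
    exact mem_cell_isPt hA (hC y hy)
  obtain ⟨k₀, -⟩ := hcon _ (hmem [] (by simp) (0, 0) (by simp))
  have hpos : 0 < ks.length := by rw [hlen]; exact Fintype.card_pos_iff.2 ⟨k₀⟩
  obtain ⟨n, hn⟩ : ∃ n, (b.D' + 1) * ks.length = n + 1 :=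
    ⟨(b.D' + 1) * ks.length - 1, by
      have : 0 < (b.D' + 1) * ks.length := Nat.mul_pos (Nat.succ_pos _) hpos
      omega⟩
  set ψ : κ → (Grid p B ι → ℝ) → ZMod p := fun k w =>
    if f k w = 0 then ∑ j, α k j * low w j else sector p (f k w) with hψ
  have hψs : ∀ k s w, IsPt M w → ψ k (act s w) = ψ k w + ∑ j, α k j * s j := by
    intro k s w hw
    simp only [hψ]
    by_cases h0 : f k w = 0
    · rw [if_pos h0, if_pos (by rw [heq, h0, mul_zero]), hw.low_act]
      simp [mul_add, Finset.sum_add_distrib]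
    · have h1 : f k (act s w) ≠ 0 := by
        rw [heq]
        refine mul_ne_zero ?_ h0
        intro h
        have := congrArg norm h
        simp at this
      rw [if_neg h0, if_neg h1, heq, sector_mul _ _ h0]
  set e : κ → List (Grid p B ι → ℝ) → ZMod p := fun k l => b.β (l.map (ψ k)) with he
  set e' : κ → List (Grid p B ι → ℝ) → ZMod p := fun k l =>
    ∑ j, α k j * b.β (l.map fun w => low w j) with he'
  have hcmp := fun k => b.cmp (ψ k) (fun j w => low w j) (α k)
  choose c hc hci using hcmp
  have hcell : ∀ C ∈ (cells M : Set (Set (Grid p B ι → ℝ))), ∀ y ∈ C, IsPt M y := by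
    rintro C ⟨A, hA, rfl⟩ y hy
    exact mem_cell_isPt hA hy
  have hconv : ∀ C ∈ (cells M : Set (Set (Grid p B ι → ℝ))), Convex ℝ C := by
    rintro C ⟨A, hA, rfl⟩
    exact convex_cell A
  have del_e : ∀ k l, del (e k) l = 0 := fun k l => by
    rw [he]; exact (del_map (ψ k) b.β l).trans (b.del_β _)
  have del_e' : ∀ k l, del (e' k) l = 0 := fun k l => by
    rw [he', del_sum]
    refine Finset.sum_eq_zero fun j _ => ?_
    rw [del_mul, del_map, b.del_β, mul_zero]
  have inv_e : ∀ k, Inv act (cells M) (e k) := by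
    intro k s C hC l hl
    simp only [he, List.map_map]
    rw [← b.β_add (∑ j, α k j * s j) (l.map (ψ k)), List.map_map]
    congr 1
    exact List.map_congr_left fun y hy => hψs k s y (hcell C hC y (hl y hy))
  have inv_e' : ∀ k, Inv act (cells M) (e' k) := by
    intro k s C hC l hl
    simp only [he', List.map_map]
    refine Finset.sum_congr rfl fun j _ => ?_
    rw [← b.β_add (s j) (l.map fun w => low w j), List.map_map]
    congr 2
    exact List.map_congr_left fun y hy => by
      simp [(hcell C hC y (hl y hy)).low_act]
  have inv_c : ∀ k, Inv act (cells M) (c k) := by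
    intro k s C hC l hl
    refine hci k (act s) s l fun y hy => ⟨hψs k s y (hcell C hC y (hl y hy)), fun j => ?_⟩
    simp [(hcell C hC y (hl y hy)).low_act]
  obtain ⟨Q, iQ, -, hQ⟩ := prodC_cohom b.D' (Inv act (cells (B := B) (p := p) M))
    (fun a c ha hc s C hC l hl => by simp only [ha s C hC l hl, hc s C hC l hl])
    (fun t a ha s C hC l hl => by simp only [ha s C hC l hl])
    (fun n a c ha hc => Inv.cup n ha hc)
    (fun s C hC l hl => unitC_map _ l) e e' c del_e del_e' hc inv_e inv_e' inv_c ks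
  have inv_prod : Inv act (cells M) (prodC (b.D' + 1) e ks) := by
    intro s C hC l hl
    exact prodC_map _ e e (act s) l (fun k l' hl' => inv_e k s C hC l' fun y hy =>
      hl y (hl'.subset hy)) ks l (List.Sublist.refl l)
  -- evaluation on the fundamental chain
  set z : (List (Grid p B ι → ℝ) → ZMod p) → ZMod p := fun c =>
    Z M b.ω (n + 1) (0, 0) (fun l => c (l.map vtx)) with hz
  have hz_sub : ∀ c c', z (fun l => c l - c' l) = z c - z c' := fun c c' => Z_sub _ _ _ _
  have hz_del : ∀ Q, Inv act (cells M) Q → z (del Q) = 0 := by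
    intro Q hQ
    simp only [hz]
    have : (fun l : List (Vert p ι) => del Q (l.map vtx)) = del fun l => Q (l.map vtx) := by
      funext l
      rw [del_map]
    rw [this]
    refine Z_del_inv b.W1 b.W2 n (by rw [hsum, hn]) _ fun s l hl => ?_
    obtain ⟨C, hC, hC'⟩ := path_cell hB l hl
    rw [← hQ s C hC (l.map vtx) ?_, List.map_map, List.map_map]
    · congr 1
      exact List.map_congr_left fun y _ => (act_vtx s y).symm
    · intro y hy
      obtain ⟨x, hx, rfl⟩ := List.mem_map.1 hy
      exact hC' x (List.mem_cons_of_mem _ hx)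
  have h1 : z (prodC (b.D' + 1) e' ks) ≠ 0 := by
    have : (fun l : List (Vert p ι) => prodC (b.D' + 1) e' ks (l.map vtx)) =
        prodC (b.D' + 1) (fun k l => ∑ j, α k j * b.β (l.map fun y => y.2 j)) ks := by
      funext l
      refine prodC_map _ e' _ vtx l (fun k l' _ => ?_) ks l (List.Sublist.refl l)
      simp only [he', List.map_map]
      refine Finset.sum_congr rfl fun j _ => ?_
      congr 2
      exact List.map_congr_left fun y _ => by simp [low_vtx]
    simp only [hz]
    rw [this, ← hn, Z_prodC b α M ks (fun j => (ks.map ld).count j) _ (by simp)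
      (by intro j; simp [hM']), NN_eq_prod α ld rk hα ks _ fun j => rfl]
    rw [Ne, List.prod_eq_zero_iff]
    simp [hld]
  have h2 : z (prodC (b.D' + 1) e ks) = z (prodC (b.D' + 1) e' ks) := by
    rw [← sub_eq_zero, ← hz_sub, funext hQ]
    exact hz_del Q iQ
  -- subdivision makes all tuples short
  set r : ℝ := ((n + 2 : ℕ) - 1 : ℝ) / (n + 2 : ℕ) with hr
  have hr0 : 0 ≤ r := by rw [hr]; push_cast; exact div_nonneg (by linarith) (by positivity)
  have hr1 : r < 1 := by rw [hr, div_lt_one (by positivity)]; linarith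
  obtain ⟨K, hK⟩ : ∃ K : ℕ, r ^ K * 2 < δ := by
    obtain ⟨K, hK⟩ := exists_pow_lt_of_lt_one (half_pos hδ) hr1
    exact ⟨K, by linarith⟩
  have h3 : z (sd^[K] (prodC (b.D' + 1) e ks)) = 0 := by
    simp only [hz]
    rw [← Z_zero (M := M) (ω := b.ω) (n + 1) (0, 0)]
    refine Z_congr _ _ _ _ fun l hl hch => ?_
    obtain ⟨C, hC, hC'⟩ := path_cell hB l hch
    refine sd_iterate_eq_zero K (n + 2) C (hconv C hC) 2 (by norm_num) (by omega) _ ?_ _ ?_ ?_ ?_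
    · intro l' hl' hlen' hs'
      obtain ⟨k, hk0, g, hg⟩ := hδ' l' (by rintro rfl; simp at hlen')
        (fun y hy => hcell C hC y (hl' y hy))
        (fun x hx y hy => (hs' x hx y hy).trans hK.le)
      refine prodC_eq_zero _ e ks k (by simp [hks]) l' fun l'' hl'' => b.close g _ fun a ha => ?_
      obtain ⟨y, hy, rfl⟩ := List.mem_map.1 ha
      have hy' := hl''.subset hy
      simp only [hψ, if_neg (hk0 y hy')]
      exact hg y hy'
    · intro y hy
      obtain ⟨x, hx, rfl⟩ := List.mem_map.1 hy
      exact hC' x hx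
    · simp [hl]
    · intro x hx y hy
      obtain ⟨x, hx, rfl⟩ := List.mem_map.1 hx
      obtain ⟨y, hy, rfl⟩ := List.mem_map.1 hy
      have hv : ∀ x : Vert p ι, ‖(vtx x : Grid p B ι → ℝ)‖ ≤ 1 := by
        intro x
        rw [pi_norm_le_iff_of_nonneg zero_le_one]
        intro q
        rw [vtx_apply]
        split_ifs <;> simp
      rw [dist_eq_norm]
      refine (norm_sub_le _ _).trans ?_
      have := hv x
      have := hv y
      linarith
  rw [functional_sd_iterate hconv z hz_sub hz_del K _ (del_prodC _ e del_e ks) inv_prod, h2] at h3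
  exact h1 h3

end Core

/-- Existence of common zeros on the complex `X`, the product over `j` of the joins of `M j + 1`
copies of `ℤ/p`: if the function `f k` transforms by the character `α k` of `(ℤ/p)^ι`, and the
linear forms `α k` are triangular with leading terms `ld k`, then the product of the Euler classes
contains the monomial dual to the fundamental class of `X` with a unit coefficient. -/
theorem exists_zero {p B : ℕ} [Fact p.Prime] {ι κ : Type} [Fintype ι] [DecidableEq ι] [Fintype κ]
    {M : ι → ℕ} (α : κ → ι → ZMod p) (ld : κ → ι) (rk : ι → ℕ)
    (hld : ∀ k, α k (ld k) ≠ 0)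
    (hα : ∀ k j, α k j ≠ 0 → j = ld k ∨ rk (ld k) < rk j)
    (hM : ∀ j, M j = (if p = 2 then 1 else 2) * (Finset.univ.filter fun k => ld k = j).card)
    (hB : ∀ j, M j ≤ B)
    (f : κ → (Grid p B ι → ℝ) → ℂ) (hf : ∀ k, Continuous (f k))
    (hre : p = 2 → ∀ k w, (f k w).im = 0)
    (heq : ∀ k s w, f k (act s w) = ZMod.stdAddChar (∑ j, α k j * s j) * f k w) :
    ∃ w : Grid p B ι → ℝ, IsPt M w ∧ ∀ k, f k w = 0 := by
  have key : ∀ (lo : LinearOrder ι) (i : DecidableEq ι), i = lo.toDecidableEq →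
      (∀ j, M j = (if p = 2 then 1 else 2) *
        (Finset.univ.filter fun k => ld k = j).card) →
      ∃ w : Grid p B ι → ℝ, IsPt M w ∧ ∀ k, f k w = 0 := by
    rintro lo _ rfl hM
    exact core α ld rk hld hα hM hB f hf hre heq
  exact key (LinearOrder.lift' (Fintype.equivFin ι) (Fintype.equivFin ι).injective) _
    (Subsingleton.elim _ _) hM

/-! ### Fourier analysis on elementary abelian groups -/

section Fourier

variable {p : ℕ} [Fact p.Prime] {e : ℕ}

/-- The degree of the Euler class of a nontrivial character of `ℤ/p`: the real dimension of the
corresponding irreducible real representation. -/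
def dg (p : ℕ) : ℕ := if p = 2 then 1 else 2

/-- The standard bilinear pairing on `(ℤ/p)^e`, as a complex character. -/
def chi (χ g : Fin e → ZMod p) : ℂ := ZMod.stdAddChar (∑ a, χ a * g a)

lemma chi_add (χ g h : Fin e → ZMod p) : chi χ (g + h) = chi χ g * chi χ h := by
  simp [chi, mul_add, Finset.sum_add_distrib, AddChar.map_add_eq_mul]

lemma chi_zero (g : Fin e → ZMod p) : chi 0 g = 1 := by simp [chi]

lemma chi_neg (χ g : Fin e → ZMod p) : chi (-χ) g = (starRingEnd ℂ) (chi χ g) := by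
  simp [chi, AddChar.map_neg_eq_conj]

lemma sum_chi (g : Fin e → ZMod p) (hg : g ≠ 0) : ∑ χ : Fin e → ZMod p, chi χ g = 0 := by
  let ψ : AddChar (Fin e → ZMod p) ℂ :=
    { toFun := fun χ => chi χ g
      map_zero_eq_one' := chi_zero g
      map_add_eq_mul' := fun a b => by
        simp [chi, add_mul, Finset.sum_add_distrib, AddChar.map_add_eq_mul] }
  have hψ : ψ ≠ 0 := by
    obtain ⟨a, ha⟩ := Function.ne_iff.1 hg
    intro h
    have h1 : ψ (Pi.single a 1) = 1 := by rw [h]; rfl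
    have h2 : ψ (Pi.single a 1) = ZMod.stdAddChar (g a) := by
      change chi _ _ = _
      simp [chi, Pi.single_apply]
    rw [h2, ← AddChar.map_zero_eq_one (ZMod.stdAddChar (N := p))] at h1
    exact ha (ZMod.injective_stdAddChar h1)
  exact AddChar.sum_eq_zero_iff_ne_zero.2 hψ

/-- A function on the group is constant as soon as its nontrivial Fourier coefficients vanish. -/
lemma const_of_fourier (T : (Fin e → ZMod p) → ℂ)
    (h : ∀ χ : Fin e → ZMod p, χ ≠ 0 → ∑ g, chi χ g * T g = 0) (g : Fin e → ZMod p) :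
    (p ^ e : ℂ) * T g = ∑ g', T g' := by
  have h1 : ∑ χ : Fin e → ZMod p, chi χ (-g) * ∑ g', chi χ g' * T g' = ∑ g', T g' := by
    rw [Finset.sum_eq_single 0]
    · simp [chi_zero]
    · intro χ _ hχ
      rw [h χ hχ, mul_zero]
    · simp
  rw [← h1]
  simp only [Finset.mul_sum, ← mul_assoc, ← chi_add]
  rw [Finset.sum_comm]
  simp only [← Finset.sum_mul]
  rw [Finset.sum_eq_single g]
  · congr 1
    simp [chi]
  · intro g' _ hg'
    rw [sum_chi _ (by rwa [Ne, neg_add_eq_zero, eq_comm]), zero_mul]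
  · simp

lemma const_of_fourier' (T : (Fin e → ZMod p) → ℂ)
    (h : ∀ χ : Fin e → ZMod p, χ ≠ 0 → ∑ g, chi χ g * T g = 0) (g g' : Fin e → ZMod p) :
    T g = T g' := by
  have hp : (p ^ e : ℂ) ≠ 0 := pow_ne_zero _ (by exact_mod_cast (Fact.out : p.Prime).ne_zero)
  exact mul_left_cancel₀ hp ((const_of_fourier T h g).trans (const_of_fourier T h g').symm)

/-- A choice of one character from each pair of inverse nontrivial characters. -/
def Half (χ : Fin e → ZMod p) : Prop :=
  χ ≠ 0 ∧ Fintype.equivFin (Fin e → ZMod p) χ ≤ Fintype.equivFin (Fin e → ZMod p) (-χ)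

lemma half_or (χ : Fin e → ZMod p) (h : χ ≠ 0) : Half χ ∨ Half (-χ) := by
  rcases le_total (Fintype.equivFin (Fin e → ZMod p) χ) (Fintype.equivFin _ (-χ)) with h' | h'
  · exact Or.inl ⟨h, h'⟩
  · exact Or.inr ⟨neg_ne_zero.2 h, by rwa [neg_neg]⟩

lemma card_nontrivial [DecidablePred fun χ : Fin e → ZMod p => χ ≠ 0] :
    Fintype.card {χ : Fin e → ZMod p // χ ≠ 0} = p ^ e - 1 := by
  classical
  have h := Fintype.card_subtype_compl (fun χ : Fin e → ZMod p => χ = 0)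
  rw [Fintype.card_subtype_eq, Fintype.card_fun, ZMod.card, Fintype.card_fin] at h
  rw [← h]

lemma card_half [DecidablePred (Half : (Fin e → ZMod p) → Prop)] :
    dg p * Fintype.card {χ : Fin e → ZMod p // Half χ} ≤ p ^ e - 1 := by
  classical
  rw [← card_nontrivial]
  by_cases hp : p = 2
  · rw [dg, if_pos hp, one_mul]
    exact Fintype.card_le_of_injective (fun χ => ⟨χ.1, χ.2.1⟩)
      fun a b h => by simpa [Subtype.ext_iff] using h
  · rw [dg, if_neg hp, two_mul, ← Fintype.card_sum]
    refine Fintype.card_le_of_injective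
      (Sum.elim (fun χ => ⟨χ.1, χ.2.1⟩) fun χ => ⟨-χ.1, neg_ne_zero.2 χ.2.1⟩) ?_
    have key : ∀ a b : {χ : Fin e → ZMod p // Half χ}, a.1 = -b.1 → False := by
      rintro ⟨a, ha⟩ ⟨b, hb⟩ (rfl : a = -b)
      have h1 := ha.2
      rw [neg_neg] at h1
      have h2 := (Fintype.equivFin (Fin e → ZMod p)).injective (le_antisymm h1 hb.2)
      have h3 : (2 : ZMod p) ≠ 0 := by
        intro h
        have : ((2 : ℕ) : ZMod p) = 0 := by exact_mod_cast h
        rw [ZMod.natCast_eq_zero_iff] at this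
        exact hp ((Nat.prime_dvd_prime_iff_eq Fact.out Nat.prime_two).1 this)
      apply hb.1
      funext i
      have h4 := congrFun h2 i
      simp only [Pi.neg_apply] at h4
      have h5 : 2 * b i = 0 := by linear_combination -h4
      exact (mul_eq_zero.1 h5).resolve_left h3
    rintro (a | a) (b | b) h <;> simp only [Sum.elim_inl, Sum.elim_inr, Subtype.mk.injEq] at h
    · rw [Subtype.ext h]
    · exact (key a b h).elim
    · exact (key b a h.symm).elim
    · rw [Subtype.ext (neg_injective h)]

/-- For a real-valued function half of the Fourier coefficients suffices, the other ones being
their conjugates. -/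
lemma const_of_half (T : (Fin e → ZMod p) → ℝ)
    (h : ∀ χ : Fin e → ZMod p, Half χ → ∑ g, chi χ g * (T g : ℂ) = 0) (g g' : Fin e → ZMod p) :
    T g = T g' := by
  have := const_of_fourier' (fun g => (T g : ℂ)) (fun χ hχ => ?_) g g'
  · exact_mod_cast this
  rcases half_or χ hχ with h1 | h1
  · exact h χ h1
  · have h2 := congrArg (starRingEnd ℂ) (h _ h1)
    rw [map_sum, map_zero] at h2
    rw [← h2]
    refine Finset.sum_congr rfl fun g _ => ?_
    rw [map_mul, ← chi_neg, neg_neg, Complex.conj_ofReal]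

lemma exists_lead (χ : Fin e → ZMod p) (h : χ ≠ 0) : ∃ a, χ a ≠ 0 ∧ ∀ b, χ b ≠ 0 → a ≤ b := by
  obtain ⟨a, ha⟩ := Function.ne_iff.1 h
  have hne : (Finset.univ.filter fun a => χ a ≠ 0).Nonempty := ⟨a, by simpa using ha⟩
  refine ⟨_, (Finset.mem_filter.1 (Finset.min'_mem _ hne)).2, fun b hb => ?_⟩
  exact Finset.min'_le _ _ (by simpa using hb)

/-- The first index at which a nontrivial character is nontrivial. -/
def lead (χ : Fin e → ZMod p) (h : χ ≠ 0) : Fin e := (exists_lead χ h).choose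

lemma lead_ne (χ : Fin e → ZMod p) (h : χ ≠ 0) : χ (lead χ h) ≠ 0 := (exists_lead χ h).choose_spec.1

lemma lead_le (χ : Fin e → ZMod p) (h : χ ≠ 0) (b : Fin e) (hb : χ b ≠ 0) : lead χ h ≤ b :=
  (exists_lead χ h).choose_spec.2 b hb

lemma stdAddChar_im (hp : p = 2) (a : ZMod p) : (ZMod.stdAddChar a : ℂ).im = 0 := by
  subst hp
  have h : (ZMod.stdAddChar a : ℂ) * ZMod.stdAddChar a = 1 := by
    rw [← AddChar.map_add_eq_mul, CharTwo.add_self_eq_zero, AddChar.map_zero_eq_one]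
  rcases mul_self_eq_one_iff.1 h with h | h <;> simp [h]

lemma chi_im (hp : p = 2) (χ g : Fin e → ZMod p) : (chi χ g).im = 0 := stdAddChar_im hp _

end Fourier

/-! ### Test functions on the configuration complex -/

section Test

variable {m p B s : ℕ} [Fact p.Prime] {e : Fin (m + 1) → ℕ}

/-- The factors of the configuration complex: `e ℓ` of them for the `ℓ`-th map, and one for each
normal direction of the sought flat. -/
abbrev Idx (e : Fin (m + 1) → ℕ) (s : ℕ) := (Σ ℓ, Fin (e ℓ)) ⊕ Fin s

/-- The barycentric coordinates of the `g`-th (unnormalized) point in the `ℓ`-th simplex. The vertex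
of the simplex is the sum of the positions in the `ℓ`-th block. -/
def Lam (ℓ : Fin (m + 1)) (g : Fin (e ℓ) → ZMod p) (n : ℕ) (w : Grid p B (Idx e s) → ℝ) :
    Fin n → ℝ := fun P =>
  ∑ q, if (∑ a, (q.1 (.inl ⟨ℓ, a⟩) : ℕ)) = P ∧ (fun a => q.2 (.inl ⟨ℓ, a⟩)) = g then w q else 0

/-- The `i`-th normal direction, a vector in `ℂ^d`; its real and imaginary parts are used when `p` is
odd. Each coordinate uses one position when `p = 2` and two consecutive ones when `p` is odd. -/
def Wv {d : ℕ} (i : Fin s) (w : Grid p B (Idx e s) → ℝ) : Fin d → ℂ := fun h =>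
  ∑ q, if (q.1 (.inr i) : ℕ) / dg p = h then ZMod.stdAddChar (q.2 (.inr i)) * (w q : ℂ) else 0

/-- The Fourier coefficient at `χ` of the function `g ↦ τ (Λ_g)`. -/
def FT {n : ℕ} (ℓ : Fin (m + 1)) (χ : Fin (e ℓ) → ZMod p) (τ : (Fin n → ℝ) → ℝ)
    (w : Grid p B (Idx e s) → ℝ) : ℂ := ∑ g, chi χ g * (τ (Lam ℓ g n w) : ℂ)

lemma sum_act {E : Type} [AddCommMonoid E] (σ : Idx e s → ZMod p)
    (φ : Grid p B (Idx e s) → E) : ∑ q : Grid p B (Idx e s), φ (q.1, q.2 - σ) = ∑ q, φ q :=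
  Equiv.sum_comp ((Equiv.refl _).prodCongr (Equiv.subRight σ)) φ

lemma Lam_act (σ : Idx e s → ZMod p) (ℓ : Fin (m + 1)) (g : Fin (e ℓ) → ZMod p) (n : ℕ)
    (w : Grid p B (Idx e s) → ℝ) :
    Lam ℓ g n (act σ w) = Lam ℓ (g - fun a => σ (.inl ⟨ℓ, a⟩)) n w := by
  funext P
  simp only [Lam, act_apply]
  rw [← sum_act σ (fun q => if (∑ a, (q.1 (.inl ⟨ℓ, a⟩) : ℕ)) = P ∧
    (fun a => q.2 (.inl ⟨ℓ, a⟩)) = g - (fun a => σ (.inl ⟨ℓ, a⟩)) then w q else 0)]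
  refine Finset.sum_congr rfl fun q _ => ?_
  congr 1
  rw [eq_iff_iff]
  refine and_congr Iff.rfl ⟨fun h => ?_, fun h => ?_⟩
  · rw [← h]; rfl
  · funext a
    simpa using congrFun h a

lemma Wv_act {d : ℕ} (σ : Idx e s → ZMod p) (i : Fin s) (w : Grid p B (Idx e s) → ℝ) (h : Fin d) :
    Wv i (act σ w) h = ZMod.stdAddChar (σ (.inr i)) * Wv i w h := by
  simp only [Wv, act_apply]
  rw [← sum_act σ (fun q => if (q.1 (.inr i) : ℕ) / dg p = h then
    ZMod.stdAddChar (q.2 (.inr i)) * (w q : ℂ) else 0), Finset.mul_sum]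
  refine Finset.sum_congr rfl fun q _ => ?_
  simp only
  split_ifs
  · rw [← mul_assoc, ← AddChar.map_add_eq_mul]
    simp
  · simp

lemma FT_act {n : ℕ} (σ : Idx e s → ZMod p) (ℓ : Fin (m + 1)) (χ : Fin (e ℓ) → ZMod p)
    (τ : (Fin n → ℝ) → ℝ) (w : Grid p B (Idx e s) → ℝ) :
    FT ℓ χ τ (act σ w) = chi χ (fun a => σ (.inl ⟨ℓ, a⟩)) * FT ℓ χ τ w := by
  simp only [FT, Lam_act]
  rw [← Equiv.sum_comp (Equiv.addRight fun a => σ (.inl ⟨ℓ, a⟩)), Finset.mul_sum]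
  refine Finset.sum_congr rfl fun g _ => ?_
  rw [Equiv.coe_addRight, chi_add, add_sub_cancel_right]
  ring

lemma continuous_Lam (ℓ : Fin (m + 1)) (g : Fin (e ℓ) → ZMod p) (n : ℕ) :
    Continuous (Lam (B := B) (s := s) ℓ g n) := by
  refine continuous_pi fun P => continuous_finsetSum _ fun q _ => ?_
  split_ifs
  · exact continuous_apply q
  · exact continuous_const

lemma continuous_Wv {d : ℕ} (i : Fin s) (h : Fin d) :
    Continuous fun w : Grid p B (Idx e s) → ℝ => Wv i w h := by
  refine continuous_finsetSum _ fun q _ => ?_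
  split_ifs
  · exact continuous_const.mul (Complex.continuous_ofReal.comp (continuous_apply q))
  · exact continuous_const

lemma continuous_FT {n : ℕ} (ℓ : Fin (m + 1)) (χ : Fin (e ℓ) → ZMod p) (τ : (Fin n → ℝ) → ℝ)
    (hτ : Continuous τ) : Continuous (FT (B := B) (s := s) ℓ χ τ) :=
  continuous_finsetSum _ fun g _ => continuous_const.mul
    (Complex.continuous_ofReal.comp (hτ.comp (continuous_Lam ℓ g n)))

lemma Wv_im {d : ℕ} (hp : p = 2) (i : Fin s) (w : Grid p B (Idx e s) → ℝ) (h : Fin d) :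
    (Wv i w h).im = 0 := by
  rw [Wv, Complex.im_sum]
  refine Finset.sum_eq_zero fun q _ => ?_
  split_ifs
  · simp [Complex.mul_im, stdAddChar_im hp]
  · simp

lemma FT_im {n : ℕ} (hp : p = 2) (ℓ : Fin (m + 1)) (χ : Fin (e ℓ) → ZMod p)
    (τ : (Fin n → ℝ) → ℝ) (w : Grid p B (Idx e s) → ℝ) : (FT ℓ χ τ w).im = 0 := by
  rw [FT, Complex.im_sum]
  exact Finset.sum_eq_zero fun g _ => by simp [Complex.mul_im, chi_im hp]

variable {M : Idx e s → ℕ} {w : Grid p B (Idx e s) → ℝ}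

lemma Lam_nonneg (hw : IsPt M w) (ℓ : Fin (m + 1)) (g : Fin (e ℓ) → ZMod p) (n : ℕ) (P : Fin n) :
    0 ≤ Lam ℓ g n w P := by
  refine Finset.sum_nonneg fun q _ => ?_
  split_ifs
  · exact hw.1 q
  · exact le_rfl

lemma Lam_sum (hw : IsPt M w) (ℓ : Fin (m + 1)) (n : ℕ) (hn : ∑ a, M (.inl ⟨ℓ, a⟩) < n) :
    ∑ g : Fin (e ℓ) → ZMod p, ∑ P, Lam ℓ g n w P = 1 := by
  rw [← hw.2.1]
  simp only [Lam]
  rw [Finset.sum_congr rfl fun g _ => Finset.sum_comm, Finset.sum_comm]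
  refine Finset.sum_congr rfl fun q _ => ?_
  by_cases hq : w q = 0
  · simp [hq]
  have hlt : ∑ a, (q.1 (.inl ⟨ℓ, a⟩) : ℕ) < n :=
    (Finset.sum_le_sum fun a _ => hw.2.2.2 q hq _).trans_lt hn
  rw [Finset.sum_eq_single fun a => q.2 (.inl ⟨ℓ, a⟩), Finset.sum_eq_single ⟨_, hlt⟩]
  · simp
  · intro P _ hP
    rw [if_neg]
    rintro ⟨h, -⟩
    exact hP (Fin.ext h.symm)
  · simp
  · intro g _ hg
    refine Finset.sum_eq_zero fun P _ => ?_
    rw [if_neg]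
    rintro ⟨-, h⟩
    exact hg h.symm
  · simp

/-- The points assigned to different group elements have disjoint supports: the positions of the
vertices in the support are totally ordered, so their sum determines the positions and hence the
group element. -/
lemma Lam_disjoint (hw : IsPt M w) (ℓ : Fin (m + 1)) (g g' : Fin (e ℓ) → ZMod p) (n : ℕ) (P : Fin n)
    (h : Lam ℓ g n w P ≠ 0) (h' : Lam ℓ g' n w P ≠ 0) : g = g' := by
  obtain ⟨q, -, hq⟩ := Finset.exists_ne_zero_of_sum_ne_zero h
  obtain ⟨q', -, hq'⟩ := Finset.exists_ne_zero_of_sum_ne_zero h'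
  simp only [ne_eq, ite_eq_right_iff, Classical.not_imp] at hq hq'
  obtain ⟨⟨h1, h2⟩, h3⟩ := hq
  obtain ⟨⟨h1', h2'⟩, h3'⟩ := hq'
  obtain ⟨hc, hc'⟩ := hw.2.2.1 q q' h3 h3'
  have heq : ∀ a, q.1 (.inl ⟨ℓ, a⟩) = q'.1 (.inl ⟨ℓ, a⟩) := by
    intro a
    rcases hc with hc | hc
    · exact Fin.ext ((Finset.sum_eq_sum_iff_of_le fun a _ => Fin.le_iff_val_le_val.1 (hc (.inl ⟨ℓ, a⟩))).1
        (h1.trans h1'.symm) a (Finset.mem_univ _))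
    · exact Fin.ext ((Finset.sum_eq_sum_iff_of_le fun a _ => Fin.le_iff_val_le_val.1 (hc (.inl ⟨ℓ, a⟩))).1
        (h1'.trans h1.symm) a (Finset.mem_univ _)).symm
  rw [← h2, ← h2']
  funext a
  exact hc' _ (heq a)

/-- The normal directions do not vanish: a coordinate is a nonnegative combination of at most two
`p`-th roots of unity, of just one when `p = 2`, and `-1` is not a `p`-th root of unity for odd
`p`. -/
lemma Wv_ne_zero {d : ℕ} (hw : IsPt M w) (i : Fin s) (hd : M (.inr i) / dg p < d) :
    ∃ h : Fin d, Wv i w h ≠ 0 := by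
  obtain ⟨q₀, hq₀⟩ : ∃ q, w q ≠ 0 := by
    by_contra! h
    have := hw.2.1
    simp [h] at this
  refine ⟨⟨(q₀.1 (.inr i) : ℕ) / dg p,
    (Nat.div_le_div_right (hw.2.2.2 q₀ hq₀ _)).trans_lt hd⟩, fun h0 => ?_⟩
  set D := dg p with hD
  set x := (q₀.1 (.inr i) : ℕ) / D with hx
  have hγ : ∀ P : ℕ, ∃ γ : ZMod p, ∀ q, w q ≠ 0 → (q.1 (.inr i) : ℕ) = P → q.2 (.inr i) = γ := by
    intro P
    by_cases h : ∃ q, w q ≠ 0 ∧ (q.1 (.inr i) : ℕ) = P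
    · obtain ⟨q, hq, hP⟩ := h
      exact ⟨q.2 (.inr i), fun q' hq' hP' =>
        (hw.2.2.1 q' q hq' hq).2 _ (Fin.ext (hP'.trans hP.symm))⟩
    · push Not at h
      exact ⟨0, fun q hq hP => (h q hq hP).elim⟩
  choose γ hγ using hγ
  set a : ℕ → ℝ := fun P => ∑ q, if (q.1 (.inr i) : ℕ) = P then w q else 0 with ha
  have ha0 : ∀ P, 0 ≤ a P := fun P => Finset.sum_nonneg fun q _ => by
    split_ifs
    · exact hw.1 q
    · exact le_rfl
  have hapos : 0 < a (q₀.1 (.inr i)) := by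
    refine Finset.sum_pos' (fun q _ => ?_) ⟨q₀, Finset.mem_univ _, ?_⟩
    · split_ifs
      · exact hw.1 q
      · exact le_rfl
    · rw [if_pos rfl]
      exact lt_of_le_of_ne (hw.1 q₀) hq₀.symm
  have hV : ∀ P, (∑ q, if (q.1 (.inr i) : ℕ) = P then
      ZMod.stdAddChar (q.2 (.inr i)) * (w q : ℂ) else 0) = ZMod.stdAddChar (γ P) * (a P : ℂ) := by
    intro P
    simp only [ha, Complex.ofReal_sum, Finset.mul_sum]
    refine Finset.sum_congr rfl fun q _ => ?_
    split_ifs with h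
    · by_cases hq : w q = 0
      · simp [hq]
      · rw [hγ P q hq h]
    · simp
  have hnorm : ∀ P, ‖(ZMod.stdAddChar (γ P) : ℂ) * (a P : ℂ)‖ = a P := by
    intro P
    rw [norm_mul, AddChar.norm_apply, one_mul, Complex.norm_real, Real.norm_of_nonneg (ha0 P)]
  by_cases hp : p = 2
  · have hD1 : D = 1 := by rw [hD, dg, if_pos hp]
    have h1 : Wv i w (⟨x, (Nat.div_le_div_right (hw.2.2.2 q₀ hq₀ _)).trans_lt hd⟩ : Fin d) =
        ZMod.stdAddChar (γ x) * (a x : ℂ) := by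
      rw [← hV]
      simp only [Wv, ← hD, hD1, Nat.div_one]
    rw [h1] at h0
    have h2 := hnorm x
    rw [h0, norm_zero] at h2
    rw [hx, hD1, Nat.div_one] at h2
    linarith
  · have hD2 : D = 2 := by rw [hD, dg, if_neg hp]
    have h1 : Wv i w (⟨x, (Nat.div_le_div_right (hw.2.2.2 q₀ hq₀ _)).trans_lt hd⟩ : Fin d) =
        ZMod.stdAddChar (γ (2 * x)) * (a (2 * x) : ℂ) +
          ZMod.stdAddChar (γ (2 * x + 1)) * (a (2 * x + 1) : ℂ) := by
      rw [← hV, ← hV, ← Finset.sum_add_distrib]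
      simp only [Wv, ← hD, hD2]
      refine Finset.sum_congr rfl fun q _ => ?_
      by_cases h2 : (q.1 (.inr i) : ℕ) = 2 * x
      · rw [if_pos (by omega), if_pos h2, if_neg (by omega), add_zero]
      · by_cases h3 : (q.1 (.inr i) : ℕ) = 2 * x + 1
        · rw [if_pos (by omega), if_neg h2, if_pos h3, zero_add]
        · rw [if_neg (by omega), if_neg h2, if_neg h3, add_zero]
    rw [h1] at h0
    have h2 : (ZMod.stdAddChar (γ (2 * x)) : ℂ) * (a (2 * x) : ℂ) =
      -(ZMod.stdAddChar (γ (2 * x + 1)) * (a (2 * x + 1) : ℂ)) := eq_neg_of_add_eq_zero_left h0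
    have h3 : a (2 * x) = a (2 * x + 1) := by
      rw [← hnorm, h2, norm_neg, hnorm]
    have h4 : 0 < a (2 * x + 1) := by
      have hx2 : x = (q₀.1 (.inr i) : ℕ) / 2 := by rw [hx, hD2]
      rcases (show (q₀.1 (.inr i) : ℕ) = 2 * x ∨ (q₀.1 (.inr i) : ℕ) = 2 * x + 1 by omega)
        with h | h
      · rw [← h3, ← h]; exact hapos
      · rw [← h]; exact hapos
    have h5 : (ZMod.stdAddChar (γ (2 * x)) : ℂ) = -ZMod.stdAddChar (γ (2 * x + 1)) := by
      have h6 : ((a (2 * x + 1) : ℝ) : ℂ) ≠ 0 := by exact_mod_cast h4.ne'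
      rw [h3, ← neg_mul] at h2
      exact mul_right_cancel₀ h6 h2
    have h6 := congrArg (· ^ p) h5
    have hodd : Odd p := (Fact.out : p.Prime).odd_of_ne_two hp
    simp only [hodd.neg_pow, ← AddChar.map_nsmul_eq_pow] at h6
    rw [nsmul_eq_mul, nsmul_eq_mul, CharP.cast_eq_zero, zero_mul, zero_mul,
      AddChar.map_zero_eq_one] at h6
    norm_num at h6

end Test

/-! ### The system of equations -/

section System

variable {m p B d s t : ℕ} [Fact p.Prime] {e N : Fin (m + 1) → ℕ}

/-- Index set of the orthogonality relations among the normal directions `W`: the triple `(i, j, b)`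
stands for `W_i · W_j = 0` if `b` is false, and for `W_i · conj W_j = 0` if `b` is true. -/
def Orth (p : ℕ) (x : Fin s × Fin s × Bool) : Prop :=
  if p = 2 then x.1 < x.2.1 ∧ x.2.2 = false else if x.2.2 then x.1 < x.2.1 else x.1 ≤ x.2.1

/-- Index set of all equations: Fourier coefficients of real-valued functions of the points of a block;
Fourier coefficients of the values `W_i · F`; equality of their averages over the blocks; and the
orthogonality relations. -/
abbrev Eqn (p : ℕ) [Fact p.Prime] (e : Fin (m + 1) → ℕ) (s t : ℕ) : Type :=
  (Σ ℓ : Fin (m + 1), {χ : Fin (e ℓ) → ZMod p // Half χ} × (Bool ⊕ Fin t)) ⊕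
  (Σ ℓ : Fin (m + 1), {χ : Fin (e ℓ) → ZMod p // χ ≠ 0} × Fin s) ⊕
  (Fin s × Fin m) ⊕ {x : Fin s × Fin s × Bool // Orth p x}

/-- A character of one block, as a character of all blocks. -/
def blk (ℓ : Fin (m + 1)) (χ : Fin (e ℓ) → ZMod p) (q : Σ ℓ, Fin (e ℓ)) : ZMod p :=
  Pi.single (M := fun ℓ => Fin (e ℓ) → ZMod p) ℓ χ q.1 q.2

/-- The character by which an equation transforms. -/
def al : Eqn p e s t → Idx e s → ZMod p
  | .inl ⟨ℓ, χ, _⟩ => Sum.elim (blk ℓ χ.1) 0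
  | .inr (.inl ⟨ℓ, χ, i⟩) => Sum.elim (blk ℓ χ.1) (Pi.single i 1)
  | .inr (.inr (.inl ⟨i, _⟩)) => Sum.elim 0 (Pi.single i 1)
  | .inr (.inr (.inr ⟨x, _⟩)) => Sum.elim 0
      (Pi.single x.1 1 + if x.2.2 then -Pi.single x.2.1 1 else Pi.single x.2.1 1)

/-- The leading term of the character of an equation. -/
def ldx : Eqn p e s t → Idx e s
  | .inl ⟨ℓ, χ, _⟩ => .inl ⟨ℓ, lead χ.1 χ.2.1⟩
  | .inr (.inl ⟨ℓ, χ, _⟩) => .inl ⟨ℓ, lead χ.1 χ.2⟩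
  | .inr (.inr (.inl ⟨i, _⟩)) => .inr i
  | .inr (.inr (.inr ⟨x, _⟩)) => .inr x.1

/-- The block of an equation whose leading term belongs to a block. -/
def blockOf : Eqn p e s t → Option (Fin (m + 1))
  | .inl ⟨ℓ, _, _⟩ => some ℓ
  | .inr (.inl ⟨ℓ, _, _⟩) => some ℓ
  | .inr (.inr _) => none

/-- The ordering of the factors that makes the characters triangular. -/
def rkx (e : Fin (m + 1) → ℕ) (s : ℕ) : Idx e s → ℕ :=
  Sum.elim (fun q => q.2) fun i => (∑ ℓ, e ℓ) + i

/-- The left-hand sides of the equations, for families `τ` of real functions and `F` of maps to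
`ℝ^d`, given by coordinates. -/
def fn (τ : ∀ ℓ, Bool ⊕ Fin t → (Fin (N ℓ + 1) → ℝ) → ℝ)
    (F : ∀ ℓ, Fin d → (Fin (N ℓ + 1) → ℝ) → ℝ) : Eqn p e s t → (Grid p B (Idx e s) → ℝ) → ℂ
  | .inl ⟨ℓ, χ, c⟩ => FT ℓ χ.1 (τ ℓ c)
  | .inr (.inl ⟨ℓ, χ, i⟩) => fun w => ∑ h, Wv i w h * FT ℓ χ.1 (F ℓ h) w
  | .inr (.inr (.inl ⟨i, l⟩)) => fun w => ∑ h, Wv i w h *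
      (FT l.succ 0 (F l.succ h) w / (p ^ e l.succ : ℂ) - FT 0 0 (F 0 h) w / (p ^ e 0 : ℂ))
  | .inr (.inr (.inr ⟨x, _⟩)) => fun w => ∑ h : Fin d, Wv x.1 w h *
      if x.2.2 then (starRingEnd ℂ) (Wv x.2.1 w h) else Wv x.2.1 w h

lemma sum_blk (ℓ : Fin (m + 1)) (χ : Fin (e ℓ) → ZMod p) (σ : (Σ ℓ, Fin (e ℓ)) → ZMod p) :
    ∑ q, blk ℓ χ q * σ q = ∑ a, χ a * σ ⟨ℓ, a⟩ := by
  rw [Fintype.sum_sigma, Finset.sum_eq_single ℓ]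
  · simp [blk]
  · intro ℓ' _ h
    simp [blk, Pi.single_eq_of_ne h]
  · simp

lemma blk_ne {ℓ : Fin (m + 1)} {χ : Fin (e ℓ) → ZMod p} {q : Σ ℓ, Fin (e ℓ)} (h : blk ℓ χ q ≠ 0) :
    ∃ a, q = ⟨ℓ, a⟩ ∧ χ a ≠ 0 := by
  obtain ⟨ℓ', a⟩ := q
  by_cases hl : ℓ' = ℓ
  · subst hl
    exact ⟨a, rfl, by simpa [blk] using h⟩
  · simp [blk, Pi.single_eq_of_ne hl] at h

lemma fn_act (τ : ∀ ℓ, Bool ⊕ Fin t → (Fin (N ℓ + 1) → ℝ) → ℝ)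
    (F : ∀ ℓ, Fin d → (Fin (N ℓ + 1) → ℝ) → ℝ) (k : Eqn p e s t) (σ : Idx e s → ZMod p)
    (w : Grid p B (Idx e s) → ℝ) :
    fn τ F k (act σ w) = ZMod.stdAddChar (∑ j, al k j * σ j) * fn τ F k w := by
  rcases k with ⟨ℓ, χ, c⟩ | ⟨ℓ, χ, i⟩ | ⟨i, l⟩ | ⟨⟨i, j, b⟩, hx⟩
  · simp only [fn, al, Fintype.sum_sum_type, Sum.elim_inl, Sum.elim_inr, FT_act]
    rw [sum_blk _ _ fun q => σ (.inl q)]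
    simp [chi]
  · simp only [fn, al, Fintype.sum_sum_type, Sum.elim_inl, Sum.elim_inr, FT_act, Wv_act]
    rw [sum_blk _ _ fun q => σ (.inl q), Finset.mul_sum, AddChar.map_add_eq_mul]
    refine Finset.sum_congr rfl fun h _ => ?_
    simp only [chi, Pi.single_apply, ite_mul, one_mul, zero_mul, Finset.sum_ite_eq',
      Finset.mem_univ, if_true]
    ring
  · simp only [fn, al, Fintype.sum_sum_type, Sum.elim_inl, Sum.elim_inr, FT_act, Wv_act]
    rw [Finset.mul_sum]
    refine Finset.sum_congr rfl fun h _ => ?_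
    simp only [chi_zero, Pi.single_apply, ite_mul, one_mul, zero_mul, Finset.sum_ite_eq',
      Finset.mem_univ, if_true, Pi.zero_apply, Finset.sum_const_zero, zero_add]
    ring
  · simp only [fn, al, Fintype.sum_sum_type, Sum.elim_inl, Sum.elim_inr, Wv_act]
    rw [Finset.mul_sum]
    refine Finset.sum_congr rfl fun h _ => ?_
    cases b
    · simp only [Pi.single_apply, ite_mul, one_mul, zero_mul, Finset.sum_ite_eq', add_mul,
        Finset.mem_univ, if_true, Pi.zero_apply, Finset.sum_const_zero, zero_add, Pi.add_apply,
        Finset.sum_add_distrib, AddChar.map_add_eq_mul, Bool.false_eq_true, if_false]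
      ring
    · simp only [Pi.single_apply, ite_mul, one_mul, zero_mul, Finset.sum_ite_eq', add_mul,
        Finset.mem_univ, if_true, Pi.zero_apply, Finset.sum_const_zero, zero_add, Pi.add_apply,
        Finset.sum_add_distrib, AddChar.map_add_eq_mul, Pi.neg_apply, neg_mul,
        Finset.sum_neg_distrib, AddChar.map_neg_eq_conj, map_mul]
      ring

lemma continuous_fn (τ : ∀ ℓ, Bool ⊕ Fin t → (Fin (N ℓ + 1) → ℝ) → ℝ)
    (hτ : ∀ ℓ c, Continuous (τ ℓ c))
    (F : ∀ ℓ, Fin d → (Fin (N ℓ + 1) → ℝ) → ℝ) (hF : ∀ ℓ h, Continuous (F ℓ h))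
    (k : Eqn p e s t) : Continuous (fn (B := B) τ F k) := by
  rcases k with ⟨ℓ, χ, c⟩ | ⟨ℓ, χ, i⟩ | ⟨i, l⟩ | ⟨⟨i, j, b⟩, hx⟩
  · exact continuous_FT _ _ _ (hτ ℓ c)
  · exact continuous_finsetSum _ fun h _ => (continuous_Wv i h).mul (continuous_FT _ _ _ (hF ℓ h))
  · exact continuous_finsetSum _ fun h _ => (continuous_Wv i h).mul
      (((continuous_FT _ _ _ (hF _ h)).div_const _).sub
        ((continuous_FT _ _ _ (hF _ h)).div_const _))
  · refine continuous_finsetSum _ fun h _ => (continuous_Wv i h).mul ?_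
    cases b
    · exact continuous_Wv j h
    · exact Complex.continuous_conj.comp (continuous_Wv j h)

lemma fn_im (hp : p = 2) (τ : ∀ ℓ, Bool ⊕ Fin t → (Fin (N ℓ + 1) → ℝ) → ℝ)
    (F : ∀ ℓ, Fin d → (Fin (N ℓ + 1) → ℝ) → ℝ) (k : Eqn p e s t) (w : Grid p B (Idx e s) → ℝ) :
    (fn τ F k w).im = 0 := by
  have hdiv : ∀ (z : ℂ) (n : ℕ), z.im = 0 → (z / (p ^ n : ℂ)).im = 0 := by
    intro z n hz
    have : (p ^ n : ℂ) = ((p ^ n : ℝ) : ℂ) := by push_cast; rfl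
    rw [this, Complex.div_ofReal_im, hz, zero_div]
  rcases k with ⟨ℓ, χ, c⟩ | ⟨ℓ, χ, i⟩ | ⟨i, l⟩ | ⟨⟨i, j, b⟩, hx⟩
  · exact FT_im hp _ _ _ _
  · simp only [fn, Complex.im_sum]
    exact Finset.sum_eq_zero fun h _ => by simp [Complex.mul_im, FT_im hp, Wv_im hp]
  · simp only [fn, Complex.im_sum]
    exact Finset.sum_eq_zero fun h _ => by
      simp [Complex.mul_im, FT_im hp, Wv_im hp, Complex.sub_im, hdiv]
  · simp only [fn, Complex.im_sum]
    refine Finset.sum_eq_zero fun h _ => ?_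
    cases b <;> simp [Complex.mul_im, Wv_im hp]

lemma two_ne_zero_zmod (hp : p ≠ 2) : (2 : ZMod p) ≠ 0 := by
  intro h
  have : ((2 : ℕ) : ZMod p) = 0 := by exact_mod_cast h
  rw [ZMod.natCast_eq_zero_iff] at this
  exact hp ((Nat.prime_dvd_prime_iff_eq Fact.out Nat.prime_two).1 this)

lemma al_ldx (k : Eqn p e s t) : al k (ldx k) ≠ 0 := by
  rcases k with ⟨ℓ, χ, c⟩ | ⟨ℓ, χ, i⟩ | ⟨i, l⟩ | ⟨⟨i, j, b⟩, hx⟩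
  · simpa [al, ldx, blk] using lead_ne χ.1 χ.2.1
  · simpa [al, ldx, blk] using lead_ne χ.1 χ.2
  · simp [al, ldx]
  · simp only [al, ldx, Sum.elim_inr, Pi.add_apply, Pi.single_eq_same]
    by_cases hij : i = j
    · subst hij
      by_cases hp : p = 2
      · simp [Orth, hp] at hx
      · cases b
        · simpa [one_add_one_eq_two] using two_ne_zero_zmod hp
        · simp [Orth, hp] at hx
    · cases b <;> simp [hij]

lemma al_triangular (k : Eqn p e s t) (j : Idx e s) (h : al k j ≠ 0) :
    j = ldx k ∨ rkx e s (ldx k) < rkx e s j := by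
  have hblk : ∀ (ℓ : Fin (m + 1)) (χ : Fin (e ℓ) → ZMod p) (hχ : χ ≠ 0) (q : Σ ℓ, Fin (e ℓ)),
      blk ℓ χ q ≠ 0 → q = ⟨ℓ, lead χ hχ⟩ ∨ (lead χ hχ : ℕ) < q.2 := by
    intro ℓ χ hχ q hq
    obtain ⟨a, rfl, ha⟩ := blk_ne hq
    rcases (lead_le χ hχ a ha).eq_or_lt with h | h
    · left; rw [h]
    · exact Or.inr h
  rcases k with ⟨ℓ, χ, c⟩ | ⟨ℓ, χ, i⟩ | ⟨i, l⟩ | ⟨⟨i, j', b⟩, hx⟩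
  · rcases j with q | i
    · rcases hblk ℓ χ.1 χ.2.1 q h with h | h
      · left; rw [h]; rfl
      · exact Or.inr h
    · exact (h rfl).elim
  · rcases j with q | i
    · rcases hblk ℓ χ.1 χ.2 q h with h | h
      · left; rw [h]; rfl
      · exact Or.inr h
    · right
      have h1 : e ℓ ≤ ∑ ℓ, e ℓ := Finset.single_le_sum (fun _ _ => Nat.zero_le _) (Finset.mem_univ ℓ)
      have h2 := (lead χ.1 χ.2).2
      simp only [rkx, ldx, Sum.elim_inl, Sum.elim_inr]
      omega
  · rcases j with q | i'
    · exact (h rfl).elim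
    · left
      by_contra hne
      have : i' ≠ i := fun h => hne (by rw [h]; rfl)
      simp [al, this] at h
  · rcases j with q | i'
    · exact (h rfl).elim
    · by_cases h1 : i' = i
      · left; rw [h1]; rfl
      · right
        by_cases h2 : i' = j'
        · have h3 : i ≤ j' := by
            unfold Orth at hx
            split_ifs at hx
            · exact hx.1.le
            · exact le_of_lt hx
            · exact hx
          subst h2
          have h4 : (i : ℕ) < i' := lt_of_le_of_ne h3 fun h => h1 (Fin.ext h.symm)
          simpa [rkx, ldx] using h4
        · cases b <;> simp [al, h1, h2] at h

open Classical in
/-- The number of positions used by a factor. -/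
def MM (p : ℕ) [Fact p.Prime] (e : Fin (m + 1) → ℕ) (s t : ℕ) (j : Idx e s) : ℕ :=
  dg p * (Finset.univ.filter fun k : Eqn p e s t => ldx k = j).card

lemma sum_MM (ℓ : Fin (m + 1)) :
    ∑ a, MM p e s t (.inl ⟨ℓ, a⟩) ≤ (p ^ e ℓ - 1) * (dg p * s + t + 2) := by
  classical
  simp only [MM, ← Finset.mul_sum, Finset.card_filter]
  rw [Finset.sum_comm]
  have h1 : ∀ k : Eqn p e s t, (∑ a, if ldx k = .inl ⟨ℓ, a⟩ then 1 else 0) ≤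
      if blockOf k = some ℓ then 1 else 0 := by
    have key : ∀ (ℓ' : Fin (m + 1)) (b : Fin (e ℓ')), (∑ a : Fin (e ℓ),
        if (Sum.inl ⟨ℓ', b⟩ : Idx e s) = .inl ⟨ℓ, a⟩ then 1 else 0) ≤
        if some ℓ' = some ℓ then 1 else 0 := by
      intro ℓ' b
      by_cases h : ℓ' = ℓ
      · subst h
        simp
      · simp [h]
    rintro (⟨ℓ', χ, c⟩ | ⟨ℓ', χ, i⟩ | ⟨i, l⟩ | ⟨x, hx⟩)
    · exact key _ _
    · exact key _ _
    · simp [ldx, blockOf]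
    · simp [ldx, blockOf]
  have h2 : (∑ k : Eqn p e s t, if blockOf k = some ℓ then 1 else 0) =
      Fintype.card {χ : Fin (e ℓ) → ZMod p // Half χ} * (2 + t) + (p ^ e ℓ - 1) * s := by
    simp only [Fintype.sum_sum_type, blockOf, Fintype.sum_sigma]
    rw [Finset.sum_eq_single ℓ, Finset.sum_eq_single ℓ]
    · simp
    · intro ℓ' _ h
      simp [h]
    · simp
    · intro ℓ' _ h
      simp [h]
    · simp
  refine (Nat.mul_le_mul_left _ (Finset.sum_le_sum fun k _ => h1 k)).trans ?_
  rw [h2]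
  have h3 := card_half (p := p) (e := e ℓ)
  calc _ = dg p * Fintype.card {χ : Fin (e ℓ) → ZMod p // Half χ} * (2 + t) +
        (p ^ e ℓ - 1) * (dg p * s) := by ring
    _ ≤ (p ^ e ℓ - 1) * (2 + t) + (p ^ e ℓ - 1) * (dg p * s) := by gcongr
    _ = _ := by ring

lemma MM_inr (i : Fin s) : MM p e s t (.inr i) / dg p < m + dg p * s := by
  classical
  have hD : 0 < dg p := by unfold dg; split_ifs <;> norm_num
  rw [MM, Nat.mul_div_cancel_left _ hD, Finset.card_filter]
  simp only [Fintype.sum_sum_type, ldx, Sum.inr.injEq, reduceCtorEq, if_false,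
    Finset.sum_const_zero, zero_add, Fintype.sum_prod_type]
  have h1 : (∑ x : Fin s, ∑ _y : Fin m, if x = i then 1 else 0) = m := by
    rw [Finset.sum_comm]; simp
  rw [h1, ← Finset.card_filter]
  refine Nat.add_lt_add_left ?_ m
  by_cases hp : p = 2
  · have h2 : (Finset.univ.filter fun x : {x : Fin s × Fin s × Bool // Orth p x} => x.1.1 = i).card ≤
        (Finset.univ.erase i).card := by
      refine Finset.card_le_card_of_injOn (fun x => x.1.2.1) ?_ ?_
      · rintro ⟨⟨i', j, b⟩, hx⟩ hi
        simp only [Finset.coe_filter, Finset.mem_univ, true_and, Set.mem_ofPred_eq] at hi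
        simp only [Orth, hp, if_true] at hx
        simp only [Finset.coe_erase, Finset.coe_univ, Set.mem_sdiff, Set.mem_univ, true_and,
          Set.mem_singleton_iff]
        rw [← hi]
        exact hx.1.ne'
      · rintro ⟨⟨i₁, j₁, b₁⟩, hx₁⟩ hi₁ ⟨⟨i₂, j₂, b₂⟩, hx₂⟩ hi₂ h
        simp only [Finset.coe_filter, Finset.mem_univ, true_and, Set.mem_ofPred_eq] at hi₁ hi₂ h
        simp only [Orth, hp, if_true] at hx₁ hx₂
        simp [hi₁, hi₂, h, hx₁.2, hx₂.2]
    refine h2.trans_lt ?_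
    rw [Finset.card_erase_of_mem (Finset.mem_univ i), Finset.card_univ, Fintype.card_fin, dg,
      if_pos hp]
    have := i.2
    omega
  · have h2 : (Finset.univ.filter fun x : {x : Fin s × Fin s × Bool // Orth p x} => x.1.1 = i).card ≤
        ((Finset.univ : Finset (Fin s × Bool)).erase (i, true)).card := by
      refine Finset.card_le_card_of_injOn (fun x => x.1.2) ?_ ?_
      · rintro ⟨⟨i', j, b⟩, hx⟩ hi
        simp only [Finset.coe_filter, Finset.mem_univ, true_and, Set.mem_ofPred_eq] at hi
        simp only [Orth, hp, if_false] at hx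
        simp only [Finset.coe_erase, Finset.coe_univ, Set.mem_sdiff, Set.mem_univ, true_and,
          Set.mem_singleton_iff, Prod.mk.injEq]
        rintro ⟨rfl, rfl⟩
        simp [hi] at hx
      · rintro ⟨⟨i₁, j₁⟩, hx₁⟩ hi₁ ⟨⟨i₂, j₂⟩, hx₂⟩ hi₂ h
        simp only [Finset.coe_filter, Finset.mem_univ, true_and, Set.mem_ofPred_eq] at hi₁ hi₂ h
        simp [hi₁, hi₂, h]
    refine h2.trans_lt ?_
    rw [Finset.card_erase_of_mem (Finset.mem_univ _), Finset.card_univ, Fintype.card_prod,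
      Fintype.card_fin, Fintype.card_bool, dg, if_neg hp]
    have := i.2
    omega

end System

/-! ### Configurations of points and normal directions -/

section Config

variable {m p d s t : ℕ} [Fact p.Prime] {e N : Fin (m + 1) → ℕ}

/-- The solution of the system of equations, freed from the complex that provides it: points `Λ` with
disjoint supports on which all `τ` are constant, and normal directions `W` along which all values of
`F` agree. -/
theorem exists_config (hN : ∀ ℓ, (p ^ e ℓ - 1) * (dg p * s + t + 2) ≤ N ℓ)
    (hd : m + dg p * s ≤ d)
    (τ : ∀ ℓ, Bool ⊕ Fin t → (Fin (N ℓ + 1) → ℝ) → ℝ) (hτ : ∀ ℓ c, Continuous (τ ℓ c))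
    (F : ∀ ℓ, Fin d → (Fin (N ℓ + 1) → ℝ) → ℝ) (hF : ∀ ℓ h, Continuous (F ℓ h)) :
    ∃ (Λ : ∀ ℓ, (Fin (e ℓ) → ZMod p) → Fin (N ℓ + 1) → ℝ) (W : Fin s → Fin d → ℂ),
      (∀ ℓ g P, 0 ≤ Λ ℓ g P) ∧ (∀ ℓ, ∑ g, ∑ P, Λ ℓ g P = 1) ∧
      (∀ ℓ g g' P, Λ ℓ g P ≠ 0 → Λ ℓ g' P ≠ 0 → g = g') ∧
      (∀ ℓ c g g', τ ℓ c (Λ ℓ g) = τ ℓ c (Λ ℓ g')) ∧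
      (∀ i, ∃ h, W i h ≠ 0) ∧ (p = 2 → ∀ i h, (W i h).im = 0) ∧
      (∀ i ℓ g ℓ' g', ∑ h, W i h * (F ℓ h (Λ ℓ g) : ℂ) = ∑ h, W i h * (F ℓ' h (Λ ℓ' g') : ℂ)) ∧
      ∀ x : Fin s × Fin s × Bool, Orth p x →
        ∑ h, W x.1 h * (if x.2.2 then (starRingEnd ℂ) (W x.2.1 h) else W x.2.1 h) = 0 := by
  classical
  obtain ⟨w, hw, hz⟩ := exists_zero (B := ∑ j, MM p e s t j) (M := MM p e s t)
    (al : Eqn p e s t → _) ldx (rkx e s) al_ldx al_triangular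
    (fun j => by unfold MM dg; congr) (fun j => Finset.single_le_sum (fun _ _ => Nat.zero_le _)
      (Finset.mem_univ j)) (fn τ F) (continuous_fn τ hτ F hF) (fun hp k w => fn_im hp τ F k w)
    (fn_act τ F)
  have hT : ∀ ℓ i (g : Fin (e ℓ) → ZMod p),
      ∑ h, Wv i w h * (F ℓ h (Lam ℓ g (N ℓ + 1) w) : ℂ) =
        ∑ h, Wv i w h * (FT ℓ 0 (F ℓ h) w / (p ^ e ℓ : ℂ)) := by
    intro ℓ i g
    have hp : (p ^ e ℓ : ℂ) ≠ 0 := pow_ne_zero _ (by exact_mod_cast (Fact.out : p.Prime).ne_zero)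
    have h1 : ∀ χ : Fin (e ℓ) → ZMod p,
        ∑ g, chi χ g * ∑ h, Wv i w h * (F ℓ h (Lam ℓ g (N ℓ + 1) w) : ℂ) =
          ∑ h, Wv i w h * FT ℓ χ (F ℓ h) w := by
      intro χ
      simp only [FT, Finset.mul_sum]
      rw [Finset.sum_comm]
      exact Finset.sum_congr rfl fun h _ => Finset.sum_congr rfl fun g _ => by ring
    have h2 := const_of_fourier
      (fun g => ∑ h, Wv i w h * (F ℓ h (Lam ℓ g (N ℓ + 1) w) : ℂ))
      (fun χ hχ => (h1 χ).trans (hz (.inr (.inl ⟨ℓ, ⟨χ, hχ⟩, i⟩)))) g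
    have h3 := h1 0
    simp only [chi_zero, one_mul] at h3
    rw [h3] at h2
    refine mul_left_cancel₀ hp (h2.trans ?_)
    rw [Finset.mul_sum]
    exact Finset.sum_congr rfl fun h _ => by field_simp
  have hT0 : ∀ ℓ i, ∑ h, Wv (d := d) i w h * (FT ℓ 0 (F ℓ h) w / (p ^ e ℓ : ℂ)) =
      ∑ h, Wv i w h * (FT 0 0 (F 0 h) w / (p ^ e 0 : ℂ)) := by
    intro ℓ i
    induction ℓ using Fin.cases with
    | zero => rfl
    | succ l =>
      have := hz (.inr (.inr (.inl ⟨i, l⟩)))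
      simp only [fn, mul_sub, Finset.sum_sub_distrib] at this
      exact sub_eq_zero.1 this
  refine ⟨fun ℓ g => Lam ℓ g (N ℓ + 1) w, fun i => Wv i w, fun ℓ g P => Lam_nonneg hw _ _ _ _,
    fun ℓ => Lam_sum hw ℓ _ (Nat.lt_succ_of_le ((sum_MM ℓ).trans (hN ℓ))),
    fun ℓ g g' P h h' => Lam_disjoint hw ℓ g g' _ P h h', fun ℓ c g g' => ?_,
    fun i => Wv_ne_zero hw i ((MM_inr i).trans_le hd), fun hp i h => Wv_im hp i w h,
    fun i ℓ g ℓ' g' => ?_, fun x hx => hz (.inr (.inr (.inr ⟨x, hx⟩)))⟩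
  · exact const_of_half (fun g => τ ℓ c (Lam ℓ g (N ℓ + 1) w))
      (fun χ hχ => hz (.inl ⟨ℓ, ⟨χ, hχ⟩, c⟩)) g g'
  · rw [hT, hT, hT0, hT0 ℓ']

end Config

/-! ### The flat -/

section Flat

variable {d m : ℕ}

lemma exists_flat {κ X : Type} [Fintype κ] [Nonempty X] (b : κ → EuclideanSpace ℝ (Fin d))
    (hb : ∀ i, b i ≠ 0) (horth : ∀ i j, i ≠ j → inner ℝ (b i) (b j) = 0)
    (hcard : Fintype.card κ + m = d) (P : X → EuclideanSpace ℝ (Fin d))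
    (hP : ∀ i x y, inner ℝ (b i) (P x) = inner ℝ (b i) (P y)) :
    ∃ L : AffineSubspace ℝ (EuclideanSpace ℝ (Fin d)),
      (L : Set (EuclideanSpace ℝ (Fin d))).Nonempty ∧ Module.finrank ℝ L.direction = m ∧
      ∀ x, P x ∈ L := by
  obtain ⟨x₀⟩ := ‹Nonempty X›
  refine ⟨AffineSubspace.mk' (P x₀) (Submodule.span ℝ (Set.range b))ᗮ,
    ⟨P x₀, AffineSubspace.self_mem_mk' _ _⟩, ?_, fun x => ?_⟩
  · rw [AffineSubspace.direction_mk']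
    have h1 := finrank_span_eq_card (linearIndependent_of_ne_zero_of_inner_eq_zero (𝕜 := ℝ) hb horth)
    have h2 := Submodule.finrank_add_finrank_orthogonal (Submodule.span ℝ (Set.range b))
    rw [h1, finrank_euclideanSpace_fin] at h2
    omega
  · rw [AffineSubspace.mem_mk', vsub_eq_sub, Submodule.mem_orthogonal]
    intro u hu
    induction hu using Submodule.span_induction with
    | mem u hu =>
      obtain ⟨i, rfl⟩ := hu
      rw [inner_sub_right, hP i x x₀, sub_self]
    | zero => simp
    | add u v _ _ hu hv => rw [inner_add_left, hu, hv, add_zero]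
    | smul c u _ hu => rw [inner_smul_left, hu, mul_zero]

/-- The real part of a complex vector. -/
def vre (W : Fin d → ℂ) : EuclideanSpace ℝ (Fin d) := WithLp.toLp 2 fun h => (W h).re

/-- The imaginary part of a complex vector. -/
def vim (W : Fin d → ℂ) : EuclideanSpace ℝ (Fin d) := WithLp.toLp 2 fun h => (W h).im

lemma inner_eq_sum (x y : EuclideanSpace ℝ (Fin d)) : inner ℝ x y = ∑ h, x h * y h := by
  simp [PiLp.inner_apply, mul_comm]

end Flat

section Flat

variable {m p d s t : ℕ}

/-- The normal directions, given as complex vectors, or all coordinate directions if `t = d`, cut out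
a flat of dimension `m` through all the points. -/
lemma exists_flat_of_dirs {X : Type} [Nonempty X] (hst : dg p * s + t + m = d)
    (ht : t = 0 ∨ t = d) (W : Fin s → Fin d → ℂ) (hW0 : ∀ i, ∃ h, W i h ≠ 0)
    (hre : p = 2 → ∀ i h, (W i h).im = 0)
    (horth : ∀ x : Fin s × Fin s × Bool, Orth p x →
      ∑ h, W x.1 h * (if x.2.2 then (starRingEnd ℂ) (W x.2.1 h) else W x.2.1 h) = 0)
    (P : X → EuclideanSpace ℝ (Fin d))
    (hP : ∀ i x y, ∑ h, W i h * (P x h : ℂ) = ∑ h, W i h * (P y h : ℂ))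
    (hPt : t = d → ∀ x y, P x = P y) :
    ∃ L : AffineSubspace ℝ (EuclideanSpace ℝ (Fin d)),
      (L : Set (EuclideanSpace ℝ (Fin d))).Nonempty ∧ Module.finrank ℝ L.direction = m ∧
      ∀ x, P x ∈ L := by
  by_cases htd : t = d
  · refine exists_flat (fun i : Fin d => EuclideanSpace.single i (1 : ℝ)) (fun i => by simp) ?_
      (by rw [Fintype.card_fin]; omega) P fun i x y => by rw [hPt htd x y]
    intro i j hij
    simp [EuclideanSpace.inner_single_left, hij]
  obtain rfl : t = 0 := ht.resolve_right htd
  have hPre : ∀ i x y, inner ℝ (vre (W i)) (P x) = inner ℝ (vre (W i)) (P y) := by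
    intro i x y
    have := congrArg Complex.re (hP i x y)
    simpa [inner_eq_sum, vre, Complex.re_sum, Complex.mul_re] using this
  have hPim : ∀ i x y, inner ℝ (vim (W i)) (P x) = inner ℝ (vim (W i)) (P y) := by
    intro i x y
    have := congrArg Complex.im (hP i x y)
    simpa [inner_eq_sum, vim, Complex.im_sum, Complex.mul_im] using this
  by_cases hp : p = 2
  · have hlt : ∀ i j, i < j → inner ℝ (vre (W i)) (vre (W j)) = 0 := by
      intro i j hij
      have h := congrArg Complex.re (horth (i, j, false) (by simp [Orth, hp, hij]))
      simpa [inner_eq_sum, vre, Complex.re_sum, Complex.mul_re, hre hp] using h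
    refine exists_flat (fun i : Fin s => vre (W i)) (fun i h0 => ?_) (fun i j hij => ?_)
      (by rw [dg, if_pos hp] at hst; rw [Fintype.card_fin]; omega) P hPre
    · obtain ⟨h, hh⟩ := hW0 i
      refine hh (Complex.ext ?_ (hre hp i h))
      have := congrArg (fun v : EuclideanSpace ℝ (Fin d) => v h) h0
      simpa [vre] using this
    · rcases lt_or_gt_of_ne hij with h | h
      · exact hlt i j h
      · rw [real_inner_comm]; exact hlt j i h
  · -- the two relations for `W i` and `W j` give the orthogonality of all real and imaginary parts
    have hlt : ∀ i j, i < j → inner ℝ (vre (W i)) (vre (W j)) = 0 ∧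
        inner ℝ (vre (W i)) (vim (W j)) = 0 ∧ inner ℝ (vim (W i)) (vre (W j)) = 0 ∧
        inner ℝ (vim (W i)) (vim (W j)) = 0 := by
      intro i j hij
      have h1 := horth (i, j, false) (by simp [Orth, hp, hij.le])
      have h2 := horth (i, j, true) (by simp [Orth, hp, hij])
      have h3 := congrArg Complex.re h1
      have h4 := congrArg Complex.im h1
      have h5 := congrArg Complex.re h2
      have h6 := congrArg Complex.im h2
      simp [Complex.mul_re, Complex.mul_im, Finset.sum_add_distrib]
        at h3 h4 h5 h6
      simp only [inner_eq_sum, vre, vim]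
      refine ⟨?_, ?_, ?_, ?_⟩ <;> linarith
    have heq : ∀ i, inner ℝ (vre (W i)) (vim (W i)) = 0 ∧
        inner ℝ (vre (W i)) (vre (W i)) = inner ℝ (vim (W i)) (vim (W i)) := by
      intro i
      have h1 := horth (i, i, false) (by simp [Orth, hp])
      have h3 := congrArg Complex.re h1
      have h4 := congrArg Complex.im h1
      simp [Complex.mul_re, Complex.mul_im, Finset.sum_add_distrib] at h3 h4
      simp only [inner_eq_sum, vre, vim]
      have h5 : ∑ h, (W i h).im * (W i h).re = ∑ h, (W i h).re * (W i h).im :=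
        Finset.sum_congr rfl fun h _ => mul_comm _ _
      constructor <;> linarith
    have hne : ∀ i, vre (W i) ≠ 0 ∧ vim (W i) ≠ 0 := by
      intro i
      have key : ¬ (vre (W i) = 0 ∧ vim (W i) = 0) := by
        rintro ⟨h1, h2⟩
        obtain ⟨h, hh⟩ := hW0 i
        have h3 := congrArg (fun v : EuclideanSpace ℝ (Fin d) => v h) h1
        have h4 := congrArg (fun v : EuclideanSpace ℝ (Fin d) => v h) h2
        exact hh (Complex.ext (by simpa [vre] using h3) (by simpa [vim] using h4))
      have h := (heq i).2
      constructor
      · intro h0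
        refine key ⟨h0, ?_⟩
        rw [h0, inner_zero_left] at h
        exact inner_self_eq_zero.1 h.symm
      · intro h0
        refine key ⟨?_, h0⟩
        rw [h0, inner_zero_left] at h
        exact inner_self_eq_zero.1 h
    refine exists_flat (fun x : Fin s × Bool => if x.2 then vim (W x.1) else vre (W x.1))
      ?_ ?_ ?_ P ?_
    · rintro ⟨i, b⟩
      cases b
      · exact (hne i).1
      · exact (hne i).2
    · rintro ⟨i, b⟩ ⟨j, c⟩ hij
      rcases lt_trichotomy i j with h | rfl | h
      · obtain ⟨h1, h2, h3, h4⟩ := hlt i j h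
        cases b <;> cases c <;> simp [*]
      · have h1 := (heq i).1
        have h2 := h1
        rw [real_inner_comm] at h2
        cases b <;> cases c <;> simp_all
      · obtain ⟨h1, h2, h3, h4⟩ := hlt j i h
        rw [real_inner_comm] at h1 h2 h3 h4
        cases b <;> cases c <;> simp [*]
    · rw [dg, if_neg hp] at hst
      rw [Fintype.card_prod, Fintype.card_fin, Fintype.card_bool]
      omega
    · rintro ⟨i, b⟩ x y
      cases b
      · exact hPre i x y
      · exact hPim i x y

end Flat

/-! ### Few vertices in every support -/

section Support

/-- The elementary symmetric polynomial of degree `n`. -/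
def esy {N : ℕ} (n : ℕ) (x : Fin N → ℝ) : ℝ :=
  ∑ S ∈ Finset.powersetCard n (Finset.univ : Finset (Fin N)), ∏ i ∈ S, x i

lemma continuous_esy {N : ℕ} (n : ℕ) : Continuous (esy n : (Fin N → ℝ) → ℝ) :=
  continuous_finsetSum _ fun _ _ => continuous_finsetProd _ fun i _ => continuous_apply i

lemma esy_eq_zero {N : ℕ} {n : ℕ} {x : Fin N → ℝ} (hx : ∀ i, 0 ≤ x i) :
    esy n x = 0 ↔ (Finset.univ.filter fun i => x i ≠ 0).card < n := by
  rw [esy, Finset.sum_eq_zero_iff_of_nonneg fun S _ => Finset.prod_nonneg fun i _ => hx i]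
  constructor
  · intro h
    by_contra! hc
    obtain ⟨S, hS, hSc⟩ := Finset.exists_subset_card_eq hc
    have := h S (Finset.mem_powersetCard.2 ⟨Finset.subset_univ _, hSc⟩)
    rw [Finset.prod_eq_zero_iff] at this
    obtain ⟨i, hi, hi0⟩ := this
    exact (Finset.mem_filter.1 (hS hi)).2 hi0
  · intro h S hS
    rw [Finset.mem_powersetCard] at hS
    rw [Finset.prod_eq_zero_iff]
    by_contra! hc
    have : S ⊆ Finset.univ.filter fun i => x i ≠ 0 := fun i hi => by simpa using hc i hi
    have := Finset.card_le_card this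
    omega

/-- If the symmetric functions of points with disjoint supports agree, then they all vanish for lack of
vertices. -/
lemma card_support_lt {G : Type} [Fintype G] {N n : ℕ} (Λ : G → Fin N → ℝ) (h0 : ∀ g i, 0 ≤ Λ g i)
    (hdisj : ∀ g g' i, Λ g i ≠ 0 → Λ g' i ≠ 0 → g = g')
    (hconst : ∀ g g', esy n (Λ g) = esy n (Λ g')) (hN : N < Fintype.card G * n) (g : G) :
    (Finset.univ.filter fun i => Λ g i ≠ 0).card < n := by
  classical
  by_contra hg
  have h1 : ∀ g', n ≤ (Finset.univ.filter fun i => Λ g' i ≠ 0).card := by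
    intro g'
    rw [← not_lt, ← esy_eq_zero (h0 g'), hconst g' g, esy_eq_zero (h0 g)]
    exact hg
  have h2 : ∑ g', (Finset.univ.filter fun i => Λ g' i ≠ 0).card ≤ N := by
    rw [← Finset.card_biUnion]
    · simpa using Finset.card_le_univ (Finset.univ.biUnion fun g' =>
        Finset.univ.filter fun i => Λ g' i ≠ 0)
    · intro a _ b _ hab
      rw [Function.onFun, Finset.disjoint_left]
      intro i hi hi'
      exact hab (hdisj a b i (Finset.mem_filter.1 hi).2 (Finset.mem_filter.1 hi').2)
  have h3 := Finset.sum_le_sum fun g' (_ : g' ∈ Finset.univ) => h1 g'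
  simp only [Finset.sum_const, Finset.card_univ, smul_eq_mul] at h3
  omega

end Support

lemma isClosed_stdSimp (N : ℕ) : IsClosed (stdSimp N) := by
  have h : stdSimp N = (⋂ i, {x | 0 ≤ x i}) ∩ {x | ∑ i, x i = 1} := by
    ext x
    simp [stdSimp]
  rw [h]
  refine (isClosed_iInter fun i => isClosed_le continuous_const ?_).inter (isClosed_eq ?_ ?_)
  all_goals fun_prop

lemma exists_extension {N d : ℕ} (f : EuclideanSpace ℝ (Fin (N + 1)) → EuclideanSpace ℝ (Fin d))
    (hf : ContinuousOn f (stdSimp N)) :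
    ∃ g : EuclideanSpace ℝ (Fin (N + 1)) → EuclideanSpace ℝ (Fin d), Continuous g ∧
      ∀ x ∈ stdSimp N, g x = f x := by
  have : TietzeExtension.{0, 0} (EuclideanSpace ℝ (Fin d)) := TietzeExtension.of_tvs ℝ
  obtain ⟨g, hg⟩ := ContinuousMap.exists_restrict_eq (isClosed_stdSimp N)
    ⟨(stdSimp N).domRestrict f, hf.domRestrict⟩
  exact ⟨g, g.continuous, fun x hx => congrArg (fun φ => φ ⟨x, hx⟩) hg⟩

/-- Choice of the number `s` of normal directions (complex ones if `p` is odd). If the parity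
condition fails then `m = 0`, and all `t = d` coordinates are used instead. -/
lemma exists_params {m d p : ℕ} (hp : p.Prime) (hmd : m < d) (heven : Even (p * (d - m)) ∨ m = 0) :
    ∃ s t, dg p * s + t + m = d ∧ (t = 0 ∨ t = d) := by
  by_cases h2 : p = 2
  · exact ⟨d - m, 0, by rw [dg, if_pos h2]; omega, Or.inl rfl⟩
  · rcases heven with h | rfl
    · have h3 : Even (d - m) := by
        rcases Nat.even_mul.1 h with h | h
        · exact absurd (hp.even_iff.1 h) h2
        · exact h
      obtain ⟨c, hc⟩ := h3
      exact ⟨c, 0, by rw [dg, if_neg h2]; omega, Or.inl rfl⟩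
    · exact ⟨0, d, by simp, Or.inr rfl⟩

lemma skeleton_bound {r d m N k : ℕ} (hr : 0 < r) (hmd : m < d) (hN : N = (r - 1) * (d + 2 - m))
    (hk : k = ⌈(((r : ℚ) - 1) / (r : ℚ)) * d⌉₊) : N + 1 < r * (k + 2) := by
  have h1 : (((r : ℚ) - 1) / (r : ℚ)) * d ≤ k := by rw [hk]; exact Nat.le_ceil _
  have hr' : (0 : ℚ) < r := by exact_mod_cast hr
  rw [div_mul_eq_mul_div, div_le_iff₀ hr'] at h1
  obtain ⟨q, rfl⟩ : ∃ q, r = q + 1 := ⟨r - 1, by omega⟩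
  have h2 : q * d ≤ k * (q + 1) := by
    have : ((q * d : ℕ) : ℚ) ≤ ((k * (q + 1) : ℕ) : ℚ) := by
      push_cast at h1 ⊢
      linarith
    exact_mod_cast this
  have h3 : q * (d + 2 - m) ≤ q * (d + 2) := Nat.mul_le_mul_left _ (by omega)
  rw [hN, Nat.add_sub_cancel]
  nlinarith

end VKF

open VKF

/-- The topological generalized transversal Van Kampen–Flores theorem. -/
theorem topological_generalized_transversal_vanKampenFlores
    (m d p : ℕ) (hp : p.Prime) (hmd : m < d)
    (e : Fin (m + 1) → ℕ)
    (heven : Even (p * (d - m)) ∨ m = 0)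
    (N : Fin (m + 1) → ℕ) (hN : ∀ ℓ, N ℓ = (p ^ e ℓ - 1) * (d + 2 - m))
    (k : Fin (m + 1) → ℕ)
    (hk : ∀ ℓ, k ℓ = ⌈(((p ^ e ℓ : ℚ) - 1) / (p ^ e ℓ : ℚ)) * d⌉₊)
    (f : ∀ ℓ : Fin (m + 1), EuclideanSpace ℝ (Fin (N ℓ + 1)) → EuclideanSpace ℝ (Fin d))
    (hf : ∀ ℓ, ContinuousOn (f ℓ) (stdSimp (N ℓ))) :
    ∃ L : AffineSubspace ℝ (EuclideanSpace ℝ (Fin d)),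
      (L : Set (EuclideanSpace ℝ (Fin d))).Nonempty ∧
      Module.finrank ℝ L.direction = m ∧
      ∀ ℓ : Fin (m + 1), ∃ σ : Fin (p ^ e ℓ) → Finset (Fin (N ℓ + 1)),
        (∀ j, (σ j).Nonempty) ∧
        (∀ j j', j ≠ j' → Disjoint (σ j) (σ j')) ∧
        (∀ j, (σ j).card ≤ k ℓ + 1) ∧
        (∀ j, (f ℓ '' simpFace (N ℓ) (σ j) ∩ (L : Set (EuclideanSpace ℝ (Fin d)))).Nonempty) := by
  classical
  have : Fact p.Prime := ⟨hp⟩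
  obtain ⟨s, t, hst, ht⟩ := exists_params hp hmd heven
  choose f' hf' hff' using fun ℓ => exists_extension (f ℓ) (hf ℓ)
  have htd : t ≤ d := by omega
  -- the points of the simplex are obtained from `Λ` by scaling with the number of points
  set pt : ∀ ℓ, (Fin (N ℓ + 1) → ℝ) → EuclideanSpace ℝ (Fin (N ℓ + 1)) :=
    fun ℓ x => WithLp.toLp 2 ((p ^ e ℓ : ℝ) • x) with hpt
  have hptc : ∀ ℓ, Continuous (pt ℓ) := fun ℓ =>
    (PiLp.continuous_toLp 2 _).comp (continuous_const_smul _)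
  set F : ∀ ℓ, Fin d → (Fin (N ℓ + 1) → ℝ) → ℝ := fun ℓ h x => f' ℓ (pt ℓ x) h with hF
  have hFc : ∀ ℓ h, Continuous (F ℓ h) := fun ℓ h =>
    (EuclideanSpace.proj h).continuous.comp ((hf' ℓ).comp (hptc ℓ))
  set τ : ∀ ℓ, Bool ⊕ Fin t → (Fin (N ℓ + 1) → ℝ) → ℝ := fun ℓ =>
    Sum.elim (fun b x => bif b then ∑ i, x i else esy (k ℓ + 2) x)
      fun c => F ℓ (Fin.castLE htd c) with hτ
  have hτc : ∀ ℓ c, Continuous (τ ℓ c) := by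
    rintro ℓ ((_ | _) | c)
    · exact continuous_esy (k ℓ + 2)
    · exact continuous_finsetSum Finset.univ fun i _ => continuous_apply i
    · exact hFc ℓ _
  obtain ⟨Λ, W, h0, h1, hdisj, hconst, hW0, hWre, hWF, horth⟩ :=
    exists_config (p := p) (e := e) (N := N) (s := s) (t := t) (d := d)
      (fun ℓ => by
        rw [hN ℓ, show d + 2 - m = dg p * s + t + 2 by omega])
      (by omega) τ hτc F hFc
  have hr : ∀ ℓ, 0 < p ^ e ℓ := fun ℓ => pow_pos hp.pos _
  have hcard : ∀ ℓ, Fintype.card (Fin (e ℓ) → ZMod p) = p ^ e ℓ := fun ℓ => by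
    rw [Fintype.card_fun, ZMod.card, Fintype.card_fin]
  have hsum : ∀ ℓ g, (p ^ e ℓ : ℝ) * ∑ i, Λ ℓ g i = 1 := by
    intro ℓ g
    have h2 := h1 ℓ
    have h3 : ∀ g', ∑ i, Λ ℓ g' i = ∑ i, Λ ℓ g i := fun g' => hconst ℓ (.inl true) g' g
    rw [Finset.sum_congr rfl fun g' _ => h3 g', Finset.sum_const,
      Finset.card_univ, hcard, nsmul_eq_mul] at h2
    exact_mod_cast h2
  have hmem : ∀ ℓ g, pt ℓ (Λ ℓ g) ∈ stdSimp (N ℓ) := by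
    intro ℓ g
    refine ⟨fun i => mul_nonneg (by positivity) (h0 ℓ g i), ?_⟩
    rw [← hsum ℓ g, Finset.mul_sum]
    rfl
  have hX : Nonempty (Σ ℓ, Fin (e ℓ) → ZMod p) := ⟨⟨0, 0⟩⟩
  obtain ⟨L, hL, hLm, hLP⟩ := exists_flat_of_dirs hst ht W hW0 hWre horth
    (fun x : Σ ℓ, Fin (e ℓ) → ZMod p => f' x.1 (pt x.1 (Λ x.1 x.2)))
    (fun i x y => hWF i x.1 x.2 y.1 y.2) (by
      rintro rfl ⟨ℓ, g⟩ ⟨ℓ', g'⟩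
      obtain rfl : m = 0 := by omega
      obtain rfl : ℓ = ℓ' := Subsingleton.elim (α := Fin 1) _ _
      ext h
      exact hconst ℓ (.inr h) g g')
  refine ⟨L, hL, hLm, fun ℓ => ?_⟩
  let E : Fin (p ^ e ℓ) ≃ (Fin (e ℓ) → ZMod p) :=
    (Fintype.equivFinOfCardEq (hcard ℓ)).symm
  refine ⟨fun j => Finset.univ.filter fun i => Λ ℓ (E j) i ≠ 0, fun j => ?_, fun j j' hj => ?_,
    fun j => ?_, fun j => ?_⟩
  · by_contra hne
    rw [Finset.not_nonempty_iff_eq_empty, Finset.filter_eq_empty_iff] at hne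
    have h2 := hsum ℓ (E j)
    rw [Finset.sum_eq_zero fun i hi => not_not.1 (hne hi), mul_zero] at h2
    exact zero_ne_one h2
  · rw [Finset.disjoint_left]
    intro i hi hi'
    exact hj (E.injective (hdisj ℓ _ _ i (Finset.mem_filter.1 hi).2 (Finset.mem_filter.1 hi').2))
  · refine Nat.le_of_lt_succ (card_support_lt (n := k ℓ + 2) (Λ ℓ) (h0 ℓ) (hdisj ℓ)
      (fun g g' => by simpa only [hτ, Sum.elim_inl, cond_false] using hconst ℓ (.inl false) g g') ?_ (E j))
    rw [hcard]
    exact skeleton_bound (hr ℓ) hmd (hN ℓ) (by rw [hk]; push_cast; rfl)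
  · refine ⟨f' ℓ (pt ℓ (Λ ℓ (E j))), ⟨pt ℓ (Λ ℓ (E j)), ⟨hmem ℓ _, fun i hi => ?_⟩,
      (hff' ℓ _ (hmem ℓ _)).symm⟩, hLP ⟨ℓ, E j⟩⟩
    refine Finset.mem_filter.2 ⟨Finset.mem_univ _, fun h => hi ?_⟩
    simp [hpt, h]
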